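/- arXiv:2103.08706 — 2 statements merged into one kernel-verified Lean document; each statement's English description precedes it below -/
import Mathlib

section
/- The ring 𝒜_n of germs at 0 ∈ ℝ^n of real analytic real-valued functions is a Noetherian ring, and for every m ≥ 1 the 𝒜_n-module 𝒜_n^m of germs at 0 of real analytic maps into ℝ^m is a Noetherian 𝒜_n-module. -/
open MeasureTheory Metric Filter Set
open scoped ENNReal NNReal Topology

noncomputable section

namespace Zhang

/-- `ℝ^n` with the Euclidean norm. -/
abbrev Euc (n : ℕ) := EuclideanSpace ℝ (Fin n)

/-- Vector fields on `ℝ^n` (as everywhere-defined maps). -/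
abbrev VF (n : ℕ) := Euc n → Euc n

/-- `ν`-parameter degrees. -/
abbrev Deg (ν : ℕ) := Fin ν → ℝ

variable {N ν n q : ℕ}

/-- Admissible multi-parameter dilation data `e = {e_1,…,e_N} ⊆ [0,∞)^ν`. -/
def AdmissibleE (e : Fin N → Fin ν → ℝ) : Prop :=
  (∀ i μ, 0 ≤ e i μ) ∧ (∀ i, ∃ μ, e i μ ≠ 0) ∧ (∀ μ, ∃ i, e i μ ≠ 0)

/-- `δ^d = ∏_μ δ_μ^{d_μ}` (real exponents). -/
def dpow (δ d : Fin ν → ℝ) : ℝ := ∏ μ, δ μ ^ d μ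

/-- The multi-parameter dilation `δ t = (δ^{e_1} t_1, …, δ^{e_N} t_N)`. -/
def dilate (e : Fin N → Fin ν → ℝ) (δ : Fin ν → ℝ) (t : Euc N) : Euc N :=
  (EuclideanSpace.equiv (Fin N) ℝ).symm fun i => dpow δ (e i) * t i

/-- `ς^{(δ)}(t) = δ^{e_1+⋯+e_N} ς(δ t)`. -/
def scaled (e : Fin N → Fin ν → ℝ) (ς : Euc N → ℝ) (δ : Fin ν → ℝ) : Euc N → ℝ :=
  fun t => (∏ i, dpow δ (e i)) * ς (dilate e δ t)

/-- `2^k = (2^{k_1},…,2^{k_ν})`. -/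
def twoPow (k : Fin ν → ℕ) : Fin ν → ℝ := fun μ => 2 ^ k μ

/-- The (global) `C^m` supremum norm of a function. -/
def CmSupNorm {E F : Type*} [NormedAddCommGroup E] [NormedSpace ℝ E]
    [NormedAddCommGroup F] [NormedSpace ℝ F] (m : ℕ) (f : E → F) : ℝ :=
  ∑ j ∈ Finset.range (m + 1), ⨆ t, ‖iteratedFDeriv ℝ j f t‖

/-- The `C^m` supremum norm of a function on a set. -/
def CmSupNormOn {E F : Type*} [NormedAddCommGroup E] [NormedSpace ℝ E]
    [NormedAddCommGroup F] [NormedSpace ℝ F] (m : ℕ) (s : Set E) (f : E → F) : ℝ :=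
  ∑ j ∈ Finset.range (m + 1), ⨆ t ∈ s, ‖iteratedFDerivWithin ℝ j f s t‖

/-- The cancellation condition: the integral of `g` in the coordinates `t_i` with
`e_i^μ ≠ 0` vanishes identically as a function of the remaining coordinates. -/
def CancelCond (e : Fin N → Fin ν → ℝ) (μ : Fin ν) (g : Euc N → ℝ) : Prop :=
  ∀ t : Fin N → ℝ,
    haveI : DecidablePred fun i : Fin N => e i μ ≠ 0 := Classical.decPred _
    (∫ s : {i : Fin N // e i μ ≠ 0} → ℝ,
        g ((EuclideanSpace.equiv (Fin N) ℝ).symm fun i =>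
          if h : e i μ ≠ 0 then s ⟨i, h⟩ else t i)) = 0

/-- Kernel data for the class `𝒦(N,e,a,ν)`: a sequence `{ς_k}_{k∈ℕ^ν}` bounded in
`C_c^∞(B^N(a))` satisfying the cancellation conditions. -/
def IsKernelSeq (e : Fin N → Fin ν → ℝ) (a : ℝ) (ς : (Fin ν → ℕ) → Euc N → ℝ) : Prop :=
  (∀ k, ContDiff ℝ (⊤ : ℕ∞) (ς k)) ∧
  (∀ k, tsupport (ς k) ⊆ ball (0 : Euc N) a) ∧
  (∀ m, ∃ C : ℝ, ∀ k, CmSupNorm m (ς k) ≤ C) ∧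
  (∀ k μ, k μ ≠ 0 → CancelCond e μ (ς k))

/-- Membership in the Fréchet space `𝒦̄(N,e,a,ν)` (closed ball support). -/
def MemKbar (e : Fin N → Fin ν → ℝ) (a : ℝ) (ς : (Fin ν → ℕ) → Euc N → ℝ) : Prop :=
  (∀ k, ContDiff ℝ (⊤ : ℕ∞) (ς k)) ∧
  (∀ k, tsupport (ς k) ⊆ closedBall (0 : Euc N) a) ∧
  (∀ m, ∃ C : ℝ, ∀ k, CmSupNorm m (ς k) ≤ C) ∧
  (∀ k μ, k μ ≠ 0 → CancelCond e μ (ς k))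

/-- The seminorm `‖{ς_k}‖_m = sup_k ‖ς_k‖_{C^m}` of `𝒦̄(N,e,a,ν)`. -/
def seqSeminorm (m : ℕ) (ς : (Fin ν → ℕ) → Euc N → ℝ) : ℝ :=
  ⨆ k, CmSupNorm m (ς k)

/-- The multi-indices `k ∈ ℕ^ν` with all coordinates `≤ M`. -/
def trunc (ν M : ℕ) : Finset (Fin ν → ℕ) :=
  Finset.image (fun k : Fin ν → Fin (M + 1) => fun μ => (k μ : ℕ)) Finset.univ

/-- The partial-sum operators `f ↦ ψ(x) Σ_{|k|≤M} ∫ f(γ_t(x)) ς_k^{(2^k)}(t) dt`. -/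
def partialOp (e : Fin N → Fin ν → ℝ) (γ : Euc N → Euc n → Euc n) (ψ : Euc n → ℝ)
    (ς : (Fin ν → ℕ) → Euc N → ℝ) (M : ℕ) (f : Euc n → ℝ) : Euc n → ℝ :=
  fun x => ψ x * ∑ k ∈ trunc ν M, ∫ t : Euc N, f (γ t x) * scaled e (ς k) (twoPow k) t

/-- `T` is bounded on `L^p`: the partial-sum operators are bounded uniformly in `M`. -/
def OpBounded (p : ℝ) (e : Fin N → Fin ν → ℝ) (γ : Euc N → Euc n → Euc n)
    (ψ : Euc n → ℝ) (ς : (Fin ν → ℕ) → Euc N → ℝ) : Prop :=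
  ∃ C : ℝ≥0, ∀ M : ℕ, ∀ f : Euc n → ℝ, ContDiff ℝ (⊤ : ℕ∞) f → HasCompactSupport f →
    eLpNorm (partialOp e γ ψ ς M f) (ENNReal.ofReal p) volume ≤
      C * eLpNorm f (ENNReal.ofReal p) volume

/-- All operators with small `ψ` and small kernels in `𝒦(N,e,a,ν)` are `L^p` bounded. -/
def AllOpsBounded (p : ℝ) (e : Fin N → Fin ν → ℝ) (γ : Euc N → Euc n → Euc n) : Prop :=
  ∃ ε a : ℝ, 0 < ε ∧ 0 < a ∧
    ∀ ψ : Euc n → ℝ, ContDiff ℝ (⊤ : ℕ∞) ψ → HasCompactSupport ψ →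
      tsupport ψ ⊆ ball (0 : Euc n) ε →
      ∀ ς : (Fin ν → ℕ) → Euc N → ℝ, IsKernelSeq e a ς → OpBounded p e γ ψ ς

/-! ### Vector fields, brackets, Carnot–Carathéodory geometry -/

/-- The Lie bracket of two vector fields. -/
def lieBracket (X Y : VF n) : VF n := fun x => fderiv ℝ Y x (X x) - fderiv ℝ X x (Y x)

/-- `ℒ(S)`: the smallest set of (vector field, degree) pairs containing `S` and
closed under Lie brackets (adding degrees). -/
inductive LieGen (S : Set (VF n × Deg ν)) : VF n × Deg ν → Prop
  | base {P : VF n × Deg ν} : P ∈ S → LieGen S P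
  | bracket {X Y : VF n} {d d' : Deg ν} : LieGen S (X, d) → LieGen S (Y, d') →
      LieGen S (lieBracket X Y, d + d')

def lieSpan (S : Set (VF n × Deg ν)) : Set (VF n × Deg ν) := {P | LieGen S P}

def unitCube (ν : ℕ) : Set (Fin ν → ℝ) := {δ | ∀ μ, 0 ≤ δ μ ∧ δ μ ≤ 1}

def vecConst (ν : ℕ) (ξ : ℝ) : Fin ν → ℝ := fun _ => ξ

/-- `a` is a measurable control with `‖Σ_l |a_l|²‖_{L^∞[0,1]} < 1`. -/
def IsSubunit {ι : Type*} [Fintype ι] (a : ℝ → ι → ℝ) : Prop :=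
  (∀ l, Measurable fun s => a s l) ∧
  ∃ c : ℝ, c < 1 ∧ ∀ᵐ s ∂(volume.restrict (Set.Icc (0 : ℝ) 1)), ∑ l, a s l ^ 2 ≤ c

/-- `g` is an absolutely continuous solution of `g' = Σ_l a_l δ^{d_l} X_l(g)`, `g(0)=x`,
in integral form. -/
def SolvesODE {ι : Type*} [Fintype ι] (X : ι → VF n) (d : ι → Deg ν) (δ : Fin ν → ℝ)
    (a : ℝ → ι → ℝ) (x : Euc n) (g : ℝ → Euc n) : Prop :=
  g 0 = x ∧ ∀ u ∈ Set.Icc (0 : ℝ) 1,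
    g u = x + ∫ s in (0 : ℝ)..u, ∑ l, a s l • dpow δ (d l) • X l (g s)

/-- The multi-parameter Carnot–Carathéodory ball `B_{(X,d)}(x,δ)` inside `Ω`. -/
def CCBall {ι : Type*} [Fintype ι] (X : ι → VF n) (d : ι → Deg ν) (Ω : Set (Euc n))
    (x : Euc n) (δ : Fin ν → ℝ) : Set (Euc n) :=
  {y | ∃ (g : ℝ → Euc n) (a : ℝ → ι → ℝ), IsSubunit a ∧
      (∀ u ∈ Set.Icc (0 : ℝ) 1, g u ∈ Ω) ∧ SolvesODE X d δ a x g ∧ g 1 = y}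

/-- `(X,d)` satisfies `𝒞(x,δ,Ω)`. -/
def SatC {ι : Type*} [Fintype ι] (X : ι → VF n) (d : ι → Deg ν) (x : Euc n)
    (δ : Fin ν → ℝ) (Ω : Set (Euc n)) : Prop :=
  ∀ a : ℝ → ι → ℝ, IsSubunit a →
    ∃ g : ℝ → Euc n, (∀ u ∈ Set.Icc (0 : ℝ) 1, g u ∈ Ω) ∧ SolvesODE X d δ a x g

/-- The derivation of a scalar function along a vector field. -/
def derivAlong (Y : VF n) (f : Euc n → ℝ) : Euc n → ℝ := fun x => fderiv ℝ f x (Y x)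

/-- `(δX)^α f`: iterated derivations indexed by the ordered multi-index `α`. -/
def derivList {ι : Type*} (X : ι → VF n) (w : ι → ℝ) (α : List ι) (f : Euc n → ℝ) :
    Euc n → ℝ :=
  α.foldr (fun l g => derivAlong (fun x => w l • X l x) g) f

/-- `(X,d)` controls `(X₀,d₀)` on `U` with parameter `ξ₁` (ambient `Ω`). -/
def ControlsOn {ι : Type*} [Fintype ι] (X : ι → VF n) (d : ι → Deg ν)
    (Ω U : Set (Euc n)) (ξ₁ : ℝ) (X₀ : VF n) (d₀ : Deg ν) : Prop :=
  (∀ x ∈ U, SatC X d x (vecConst ν ξ₁) Ω) ∧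
  ∃ c : Euc n → (Fin ν → ℝ) → ι → Euc n → ℝ,
    (∀ x ∈ U, ∀ δ ∈ unitCube ν, ∀ y ∈ CCBall X d Ω x (fun μ => ξ₁ * δ μ),
      dpow δ d₀ • X₀ y = ∑ l, c x δ l y • dpow δ (d l) • X l y) ∧
    (∀ x ∈ U, ∀ δ ∈ unitCube ν, ∀ l, ∀ α : List ι,
      ContinuousOn (derivList X (fun l' => dpow δ (d l')) α (c x δ l))
        (CCBall X d Ω x (fun μ => ξ₁ * δ μ))) ∧
    (∀ m : ℕ, ∃ C : ℝ, ∀ x ∈ U, ∀ δ ∈ unitCube ν, ∀ l, ∀ α : List ι, α.length ≤ m →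
      ∀ y ∈ CCBall X d Ω x (fun μ => ξ₁ * δ μ),
        |derivList X (fun l' => dpow δ (d l')) α (c x δ l) y| ≤ C)

/-- `(X,d)` controls `(X₀,d₀)` (some `U`, `ξ₁`), ambient `Ω`. -/
def ControlsPair {ι : Type*} [Fintype ι] (X : ι → VF n) (d : ι → Deg ν)
    (Ω : Set (Euc n)) (X₀ : VF n) (d₀ : Deg ν) : Prop :=
  ∃ (U : Set (Euc n)) (ξ₁ : ℝ), IsOpen U ∧ (0 : Euc n) ∈ U ∧ U ⊆ Ω ∧ 0 < ξ₁ ∧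
    ControlsOn X d Ω U ξ₁ X₀ d₀

/-- A finite set of pairs controls a pair (ambient neighborhood existentially quantified). -/
def FinsetControls (F : Finset (VF n × Deg ν)) (P : VF n × Deg ν) : Prop :=
  ∃ Ω : Set (Euc n), IsOpen Ω ∧ (0 : Euc n) ∈ Ω ∧
    ControlsPair (fun l : F => (l : VF n × Deg ν).1) (fun l : F => (l : VF n × Deg ν).2)
      Ω P.1 P.2

/-- A set `S` of pairs controls a set `T`. -/
def SetControls (S T : Set (VF n × Deg ν)) : Prop :=
  ∃ F : Finset (VF n × Deg ν), ↑F ⊆ S ∧ ∀ P ∈ S ∪ T, FinsetControls F P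

/-! ### Degrees, Taylor coefficients, exponential coefficients -/

def degMulti (e : Fin N → Fin ν → ℝ) (α : Fin N → ℕ) : Fin ν → ℝ :=
  fun μ => ∑ i, (α i : ℝ) * e i μ

/-- A degree is pure if it has exactly one nonzero coordinate. -/
def IsPureDeg (dg : Fin ν → ℝ) : Prop := ∃! μ, dg μ ≠ 0

/-- `t^α`. -/
def monomial (α : Fin N → ℕ) (t : Euc N) : ℝ := ∏ i, t i ^ α i

/-- The multi-indices `α` with `|α| < M`. -/
def multiIdxLt (N M : ℕ) : Finset (Fin N → ℕ) :=
  (trunc N M).filter fun α => ∑ i, α i < M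

/-- `X` is the family of Taylor coefficient vector fields of `W` at `t = 0`, on `U`. -/
def IsTaylorFieldOf (W : Euc N → Euc n → Euc n) (U : Set (Euc n))
    (X : (Fin N → ℕ) → VF n) : Prop :=
  X 0 = 0 ∧ (∀ α, ContDiffOn ℝ (⊤ : ℕ∞) (X α) U) ∧
  ∀ M : ℕ, ∃ C ε : ℝ, 0 < ε ∧ ∀ t ∈ ball (0 : Euc N) ε, ∀ x ∈ U,
    ‖W t x - ∑ α ∈ multiIdxLt N M, monomial α t • X α x‖ ≤ C * ‖t‖ ^ M

/-- `W(t,x) = (d/dε)|_{ε=1} γ_{εt}(γ_t⁻¹(x))` on `B^N(ρ) × U`. -/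
def IsWFor (γ : Euc N → Euc n → Euc n) (ρ : ℝ) (U : Set (Euc n))
    (W : Euc N → Euc n → Euc n) : Prop :=
  ∃ γinv : Euc N → Euc n → Euc n,
    (∀ t ∈ ball (0 : Euc N) ρ, ∀ x ∈ U, γ t (γinv t x) = x ∧ γinv t (γ t x) = x) ∧
    ∀ t ∈ ball (0 : Euc N) ρ, ∀ x ∈ U,
      HasDerivAt (fun ε : ℝ => γ (ε • t) (γinv t x)) (W t x) 1

/-- `y` is the time-one flow of the vector field `V` from `x`. -/
def FlowsTo (V : VF n) (x y : Euc n) : Prop :=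
  ∃ φ : ℝ → Euc n, φ 0 = x ∧ φ 1 = y ∧ ∀ s ∈ Set.Icc (0 : ℝ) 1, HasDerivAt φ (V (φ s)) s

/-- `Xh` is the family of exponential coefficient vector fields of `γ`:
`γ_t(x) = e^{Σ_{0<|α|<M} t^α X̂_α} x + O(|t|^M)` for every `M`. -/
def IsExpFieldsFor (γ : Euc N → Euc n → Euc n) (U : Set (Euc n))
    (Xh : (Fin N → ℕ) → VF n) : Prop :=
  Xh 0 = 0 ∧ (∀ α, ContDiffOn ℝ (⊤ : ℕ∞) (Xh α) U) ∧
  ∀ M : ℕ, ∃ C ε : ℝ, 0 < ε ∧ ∀ t ∈ ball (0 : Euc N) ε, ∀ x ∈ U,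
    ∃ y : Euc n, FlowsTo (fun z => ∑ α ∈ multiIdxLt N M, monomial α t • Xh α z) x y ∧
      ‖γ t x - y‖ ≤ C * ‖t‖ ^ M

/-- The pure power set `𝒫` of a family of coefficient fields. -/
def pureSet (e : Fin N → Fin ν → ℝ) (X : (Fin N → ℕ) → VF n) : Set (VF n × Deg ν) :=
  {P | ∃ α : Fin N → ℕ, α ≠ 0 ∧ IsPureDeg (degMulti e α) ∧ P = (X α, degMulti e α)}

/-- The nonpure power set `𝒩` of a family of coefficient fields. -/
def nonpureSet (e : Fin N → Fin ν → ℝ) (X : (Fin N → ℕ) → VF n) : Set (VF n × Deg ν) :=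
  {P | ∃ α : Fin N → ℕ, α ≠ 0 ∧ ¬ IsPureDeg (degMulti e α) ∧ P = (X α, degMulti e α)}

/-! ### Strong control -/

/-- `(X,d)` strongly controls `(X₀,d₀)`. -/
def StrongControlsOn {ι : Type*} [Fintype ι] (X : ι → VF n) (d : ι → Deg ν)
    (X₀ : VF n) (d₀ : Deg ν) : Prop :=
  ∃ (U V : Set (Euc n)) (c : ι → Euc n → ℝ),
    IsOpen U ∧ (0 : Euc n) ∈ U ∧ IsOpen V ∧ closure U ⊆ V ∧
    (∀ l, ContDiffOn ℝ (⊤ : ℕ∞) (c l) V) ∧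
    (∀ l, ¬ (∀ μ, d l μ ≤ d₀ μ) → c l = 0) ∧
    (∀ x ∈ U, X₀ x = ∑ l, c l x • X l x)

/-- A finite set of pairs strongly controls a pair. -/
def FinsetStrongControls (F : Finset (VF n × Deg ν)) (P : VF n × Deg ν) : Prop :=
  StrongControlsOn (fun l : F => (l : VF n × Deg ν).1) (fun l : F => (l : VF n × Deg ν).2)
    P.1 P.2

/-- `(X,d)` strongly controls `W(t,x)`. -/
def StrongControlsW {ι : Type*} [Fintype ι] (X : ι → VF n) (d : ι → Deg ν)
    (e : Fin N → Fin ν → ℝ) (W : Euc N → Euc n → Euc n) : Prop :=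
  ∃ (ρ' : ℝ) (U : Set (Euc n)) (V : Set (Euc N × Euc n)) (A : Finset (Fin N → ℕ))
    (c : ι → (Fin N → ℕ) → Euc N → Euc n → ℝ),
    0 < ρ' ∧ IsOpen U ∧ (0 : Euc n) ∈ U ∧ IsOpen V ∧
    closure (ball (0 : Euc N) ρ' ×ˢ U) ⊆ V ∧
    (∀ l α, ContDiffOn ℝ (⊤ : ℕ∞) (fun p : Euc N × Euc n => c l α p.1 p.2) V) ∧
    (∀ l α, degMulti e α ≠ d l → c l α = 0) ∧
    (∀ t ∈ ball (0 : Euc N) ρ', ∀ x ∈ U,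
      W t x = ∑ l, ∑ α ∈ A, (c l α t x * monomial α t) • X l x)

/-- A finite set of pairs strongly controls `W`. -/
def FinsetStrongControlsW (F : Finset (VF n × Deg ν)) (e : Fin N → Fin ν → ℝ)
    (W : Euc N → Euc n → Euc n) : Prop :=
  StrongControlsW (fun l : F => (l : VF n × Deg ν).1) (fun l : F => (l : VF n × Deg ν).2)
    e W

/-! ### Control of `W` -/

/-- `∂_{t_i}` applied to a function of `(t,u)`. -/
def derivTAlong (i : Fin N) (f : Euc N → Euc n → ℝ) : Euc N → Euc n → ℝ :=
  fun t u => fderiv ℝ (fun s => f s u) t (EuclideanSpace.single i (1 : ℝ))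

/-- Iterated `t`-partials indexed by an ordered multi-index. -/
def derivTList (β : List (Fin N)) (f : Euc N → Euc n → ℝ) : Euc N → Euc n → ℝ :=
  β.foldr derivTAlong f

/-- Iterated `u`-derivations along scaled vector fields. -/
def derivUList {ι : Type*} (X : ι → VF n) (w : ι → ℝ) (β : List ι)
    (f : Euc N → Euc n → ℝ) : Euc N → Euc n → ℝ :=
  fun t => derivList X w β (f t)

/-- `(X,d)` controls `W` on `U` for `t ∈ B^N(ρ')` with parameter `ξ₁` (ambient `Ω`). -/
def ControlsWOn {ι : Type*} [Fintype ι] (X : ι → VF n) (d : ι → Deg ν)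
    (e : Fin N → Fin ν → ℝ) (Ω U : Set (Euc n)) (ρ' ξ₁ : ℝ)
    (W : Euc N → Euc n → Euc n) : Prop :=
  (∀ x ∈ U, SatC X d x (vecConst ν ξ₁) Ω) ∧
  ∃ c : Euc n → (Fin ν → ℝ) → ι → Euc N → Euc n → ℝ,
    (∀ x ∈ U, ∀ δ ∈ unitCube ν, ∀ t ∈ ball (0 : Euc N) ρ',
      ∀ u ∈ CCBall X d Ω x (fun μ => ξ₁ * δ μ),
        W (dilate e δ t) u = ∑ l, c x δ l t u • dpow δ (d l) • X l u) ∧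
    (∀ x ∈ U, ∀ δ ∈ unitCube ν, ∀ l, ∀ β' : List (Fin N), ∀ β : List ι,
      ContinuousOn
        (fun p : Euc N × Euc n =>
          derivTList β' (derivUList X (fun l' => dpow δ (d l')) β (c x δ l)) p.1 p.2)
        (ball (0 : Euc N) ρ' ×ˢ CCBall X d Ω x (fun μ => ξ₁ * δ μ))) ∧
    (∀ m : ℕ, ∃ C : ℝ, ∀ x ∈ U, ∀ δ ∈ unitCube ν, ∀ l, ∀ β' : List (Fin N), ∀ β : List ι,
      β'.length + β.length ≤ m → ∀ t ∈ ball (0 : Euc N) ρ',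
        ∀ u ∈ CCBall X d Ω x (fun μ => ξ₁ * δ μ),
          |derivTList β' (derivUList X (fun l' => dpow δ (d l')) β (c x δ l)) t u| ≤ C)

/-- `(X,d)` controls `W` (some `ρ' ≤ ρ`, `ξ₁`, `U`), ambient `Ω`. -/
def ControlsW {ι : Type*} [Fintype ι] (X : ι → VF n) (d : ι → Deg ν)
    (e : Fin N → Fin ν → ℝ) (Ω : Set (Euc n)) (ρ : ℝ)
    (W : Euc N → Euc n → Euc n) : Prop :=
  ∃ (ρ' ξ₁ : ℝ) (U : Set (Euc n)), 0 < ρ' ∧ ρ' ≤ ρ ∧ 0 < ξ₁ ∧ IsOpen U ∧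
    (0 : Euc n) ∈ U ∧ U ⊆ Ω ∧ ControlsWOn X d e Ω U ρ' ξ₁ W

end Zhang

open Zhang Filter

/-- The ring `𝒜_n` of germs at `0 ∈ ℝ^n` of real analytic real-valued functions, as a
subring of the ring of germs at `0` of functions. -/
def analyticGermSubring (n : ℕ) : Subring ((nhds (0 : Euc n)).Germ ℝ) where
  carrier := {g | ∃ f : Euc n → ℝ, AnalyticAt ℝ f 0 ∧ g = ↑f}
  mul_mem' := by
    rintro g h ⟨f, hf, rfl⟩ ⟨f', hf', rfl⟩
    exact ⟨f * f', hf.mul hf', (Germ.coe_mul f f').symm⟩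
  one_mem' := ⟨fun _ => 1, analyticAt_const, rfl⟩
  add_mem' := by
    rintro g h ⟨f, hf, rfl⟩ ⟨f', hf', rfl⟩
    exact ⟨f + f', hf.add hf', (Germ.coe_add f f').symm⟩
  zero_mem' := ⟨fun _ => 0, analyticAt_const, rfl⟩
  neg_mem' := by
    rintro g ⟨f, hf, rfl⟩
    exact ⟨-f, hf.neg, (Germ.coe_neg f).symm⟩

/-- The `𝒜_n`-module `𝒜_n^m` of germs at `0 ∈ ℝ^n` of real analytic maps into `ℝ^m`, as a
submodule (over the subring `𝒜_n`) of the module of germs at `0` of maps into `ℝ^m`. -/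
def analyticGermSubmodule (n m : ℕ) :
    Submodule (analyticGermSubring n) ((nhds (0 : Euc n)).Germ (Euc m)) where
  carrier := {g | ∃ f : Euc n → Euc m, AnalyticAt ℝ f 0 ∧ g = ↑f}
  add_mem' := by
    rintro g h ⟨f, hf, rfl⟩ ⟨f', hf', rfl⟩
    exact ⟨f + f', hf.add hf', (Germ.coe_add f f').symm⟩
  zero_mem' := ⟨fun _ => 0, analyticAt_const, rfl⟩
  smul_mem' := by
    rintro r g ⟨f, hf, rfl⟩
    obtain ⟨fr, hfr, hr⟩ := r.2
    refine ⟨fun y => fr y • f y, hfr.smul hf, ?_⟩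
    show (r : (nhds (0 : Euc n)).Germ ℝ) • (↑f : (nhds (0 : Euc n)).Germ (Euc m)) = _
    rw [hr, ← Germ.coe_smul']
    rfl

namespace ConvergentSeries

variable {n : ℕ}

/-- The exponents of monomials in `n` variables, encoded as natural numbers by sending the `i`-th
variable to the `i`-th prime. -/
def code (α : Fin n →₀ ℕ) : ℕ := ∏ i : Fin n, Nat.nth Nat.Prime i ^ α i

lemma prime_nth (i : ℕ) : (Nat.nth Nat.Prime i).Prime := Nat.prime_nth_prime i

lemma code_pos (α : Fin n →₀ ℕ) : 0 < code α :=
  Finset.prod_pos fun i _ => pow_pos (prime_nth i).pos _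

lemma code_zero : code (0 : Fin n →₀ ℕ) = 1 := by simp [code]

lemma code_add (α β : Fin n →₀ ℕ) : code (α + β) = code α * code β := by
  simp [code, pow_add, Finset.prod_mul_distrib]

lemma factorization_code (α : Fin n →₀ ℕ) (i : Fin n) :
    (code α).factorization (Nat.nth Nat.Prime i) = α i := by
  have h0 : ∀ j ∈ (Finset.univ : Finset (Fin n)), Nat.nth Nat.Prime j ^ α j ≠ 0 :=
    fun j _ => pow_ne_zero _ (prime_nth j).ne_zero
  rw [code, Nat.factorization_prod h0, Finsupp.finsetSum_apply, Finset.sum_eq_single i]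
  · simp
  · intro j _ hj
    have : Nat.nth Nat.Prime j ≠ Nat.nth Nat.Prime i := fun h =>
      hj (Fin.ext (Nat.nth_injective Nat.infinite_setOfPred_prime h))
    simp [this]
  · simp

lemma code_injective : Function.Injective (code (n := n)) := fun α β h => by
  ext i
  rw [← factorization_code α, h, factorization_code]

/-- The value of the monomial of exponent `α` at the point whose `i`-th coordinate is `pᵢ⁻ˢ`,
where `pᵢ` is the `i`-th prime. -/
def weight (s : ℕ) (α : Fin n →₀ ℕ) : ℝ≥0∞ := (code α : ℝ≥0∞)⁻¹ ^ s

lemma inv_code_le_one (α : Fin n →₀ ℕ) : (code α : ℝ≥0∞)⁻¹ ≤ 1 :=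
  ENNReal.inv_le_one.2 (by exact_mod_cast code_pos α)

lemma weight_add (s : ℕ) (α β : Fin n →₀ ℕ) : weight s (α + β) = weight s α * weight s β := by
  rw [weight, code_add, Nat.cast_mul, ENNReal.mul_inv (by simp) (by simp), mul_pow, weight, weight]

lemma weight_ne_zero (s : ℕ) (α : Fin n →₀ ℕ) : weight s α ≠ 0 := pow_ne_zero _ (by simp)

lemma weight_ne_top (s : ℕ) (α : Fin n →₀ ℕ) : weight s α ≠ ⊤ :=
  ENNReal.pow_ne_top (by simpa using (code_pos α).ne')

lemma weight_anti (α : Fin n →₀ ℕ) : Antitone fun s => weight s α := fun _ _ h =>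
  pow_le_pow_right_of_le_one' (inv_code_le_one α) h

/-- The weighted `ℓ¹`-norm of a power series. -/
def wnorm (s : ℕ) (a : MvPowerSeries (Fin n) ℝ) : ℝ≥0∞ :=
  ∑' α, ‖MvPowerSeries.coeff α a‖ₑ * weight s α

lemma wnorm_anti (a : MvPowerSeries (Fin n) ℝ) : Antitone fun s => wnorm s a := fun _ _ h =>
  ENNReal.tsum_le_tsum fun α => by gcongr; exact weight_anti α h

lemma wnorm_zero (s : ℕ) : wnorm s (0 : MvPowerSeries (Fin n) ℝ) = 0 := by simp [wnorm]

lemma wnorm_neg (s : ℕ) (a : MvPowerSeries (Fin n) ℝ) : wnorm s (-a) = wnorm s a := by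
  simp [wnorm]

lemma wnorm_add_le (s : ℕ) (a b : MvPowerSeries (Fin n) ℝ) :
    wnorm s (a + b) ≤ wnorm s a + wnorm s b := by
  rw [wnorm, wnorm, wnorm, ← ENNReal.tsum_add]
  refine ENNReal.tsum_le_tsum fun α => ?_
  rw [← add_mul, map_add]
  gcongr
  exact enorm_add_le _ _

lemma wnorm_sub_le (s : ℕ) (a b : MvPowerSeries (Fin n) ℝ) :
    wnorm s (a - b) ≤ wnorm s a + wnorm s b := by
  simpa [sub_eq_add_neg, wnorm_neg] using wnorm_add_le s a (-b)

lemma wnorm_sum_le {ι : Type*} (s : ℕ) (A : Finset ι) (a : ι → MvPowerSeries (Fin n) ℝ) :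
    wnorm s (∑ i ∈ A, a i) ≤ ∑ i ∈ A, wnorm s (a i) :=
  Finset.le_sum_of_subadditive _ (wnorm_zero s).le (wnorm_add_le s) _ _

lemma wnorm_monomial (s : ℕ) (α : Fin n →₀ ℕ) (c : ℝ) :
    wnorm s (MvPowerSeries.monomial α c) = ‖c‖ₑ * weight s α := by
  classical
  rw [wnorm, tsum_eq_single α, MvPowerSeries.coeff_monomial_same]
  intro β hβ
  simp [MvPowerSeries.coeff_monomial_ne hβ]

lemma wnorm_mul_le (s : ℕ) (a b : MvPowerSeries (Fin n) ℝ) :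
    wnorm s (a * b) ≤ wnorm s a * wnorm s b := by
  classical
  have key : wnorm s a * wnorm s b = ∑' γ, ∑ p ∈ Finset.HasAntidiagonal.antidiagonal γ,
      (‖MvPowerSeries.coeff p.1 a‖ₑ * weight s p.1) *
        (‖MvPowerSeries.coeff p.2 b‖ₑ * weight s p.2) := by
    simp_rw [wnorm, ← ENNReal.tsum_mul_right, ← ENNReal.tsum_mul_left]
    rw [← ENNReal.tsum_prod, ← Finset.HasAntidiagonal.sigmaAntidiagonalEquivProd.tsum_eq,
      ENNReal.tsum_sigma']
    refine tsum_congr fun γ => ?_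
    rw [tsum_fintype]
    exact Finset.sum_coe_sort (Finset.HasAntidiagonal.antidiagonal γ) fun p =>
      (‖MvPowerSeries.coeff p.1 a‖ₑ * weight s p.1) * (‖MvPowerSeries.coeff p.2 b‖ₑ * weight s p.2)
  rw [key, wnorm]
  refine ENNReal.tsum_le_tsum fun γ => ?_
  rw [MvPowerSeries.coeff_mul]
  refine (mul_le_mul_left (enorm_sum_le _ _) _).trans ?_
  rw [Finset.sum_mul]
  refine Finset.sum_le_sum fun p hp => ?_
  rw [← Finset.HasAntidiagonal.mem_antidiagonal.1 hp, weight_add, enorm_mul, mul_mul_mul_comm]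

lemma eq_zero_of_wnorm_eq_zero {s : ℕ} {a : MvPowerSeries (Fin n) ℝ} (h : wnorm s a = 0) :
    a = 0 := by
  ext α
  have := ENNReal.tsum_eq_zero.1 h α
  simpa [weight_ne_zero] using this

/-- A Neumann series argument for contractions of the weighted `ℓ¹`-space. -/
lemma exists_sub_map_eq (s : ℕ) (D : MvPowerSeries (Fin n) ℝ →+ MvPowerSeries (Fin n) ℝ)
    (hD : ∀ h, wnorm s (D h) ≤ 2⁻¹ * wnorm s h) (g : MvPowerSeries (Fin n) ℝ)
    (hg : wnorm s g ≠ ⊤) : ∃ H, wnorm s H ≠ ⊤ ∧ H - D H = g := by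
  set u : ℕ → MvPowerSeries (Fin n) ℝ := fun m => D^[m] g with hu
  have hu1 : ∀ m, u (m + 1) = D (u m) := fun m => Function.iterate_succ_apply' D m g
  have hun : ∀ m, wnorm s (u m) ≤ 2⁻¹ ^ m * wnorm s g := by
    intro m
    induction m with
    | zero => simp [hu]
    | succ m ih =>
      rw [hu1, pow_succ', mul_assoc]
      exact (hD _).trans (by gcongr)
  have htail : ∀ M, ∑' m, wnorm s (u (m + M)) ≤ 2 * 2⁻¹ ^ M * wnorm s g := fun M => calc
    ∑' m, wnorm s (u (m + M)) ≤ ∑' m, 2⁻¹ ^ m * (2⁻¹ ^ M * wnorm s g) :=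
      ENNReal.tsum_le_tsum fun m => (hun _).trans_eq (by rw [pow_add, mul_assoc])
    _ = _ := by
      rw [ENNReal.tsum_mul_right, ENNReal.tsum_geometric, ENNReal.one_sub_inv_two, inv_inv,
        mul_assoc]
  have hsum : ∀ α, Summable fun m => MvPowerSeries.coeff α (u m) := by
    intro α
    refine Summable.of_enorm ?_
    have h1 : (∑' m, ‖MvPowerSeries.coeff α (u m)‖ₑ) * weight s α ≠ ⊤ := by
      rw [← ENNReal.tsum_mul_right]
      refine ne_top_of_le_ne_top ?_ ((ENNReal.tsum_le_tsum fun m =>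
        ENNReal.le_tsum (f := fun α => ‖MvPowerSeries.coeff α (u m)‖ₑ * weight s α) α).trans
          (htail 0))
      exact ENNReal.mul_ne_top (by simp) hg
    exact fun h => h1 (by rw [h, ENNReal.top_mul (weight_ne_zero s α)])
  let H : MvPowerSeries (Fin n) ℝ := fun α => ∑' m, MvPowerSeries.coeff α (u m)
  have hHc : ∀ α, MvPowerSeries.coeff α H = ∑' m, MvPowerSeries.coeff α (u m) := fun _ => rfl
  have hH : ∀ M, wnorm s (H - ∑ m ∈ Finset.range M, u m) ≤ 2 * 2⁻¹ ^ M * wnorm s g := by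
    intro M
    refine le_trans ?_ (htail M)
    simp_rw [wnorm]
    rw [ENNReal.tsum_comm]
    refine ENNReal.tsum_le_tsum fun α => ?_
    rw [ENNReal.tsum_mul_right]
    gcongr
    rw [map_sub, hHc, map_sum, ← (hsum α).sum_add_tsum_nat_add M, add_sub_cancel_left]
    exact enorm_tsum_le_tsum_enorm
  refine ⟨H, ne_top_of_le_ne_top (b := 2 * 2⁻¹ ^ 0 * wnorm s g) ?_ (by simpa using hH 0), ?_⟩
  · exact ENNReal.mul_ne_top (by simp) hg
  have htel : ∀ M, (∑ m ∈ Finset.range M, u m) - D (∑ m ∈ Finset.range M, u m) = g - u M := by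
    intro M
    rw [map_sum, ← Finset.sum_sub_distrib]
    simp_rw [← hu1]
    rw [Finset.sum_range_sub']
    rfl
  have hbound : ∀ M : ℕ, wnorm s (H - D H - g) ≤ 2⁻¹ ^ M * (4 * wnorm s g) := by
    intro M
    set F := ∑ m ∈ Finset.range M, u m
    have e : H - D H - g = (H - F) - D (H - F) - u M := by
      rw [map_sub]
      linear_combination (htel M)
    calc wnorm s (H - D H - g) ≤ wnorm s (H - F) + wnorm s (D (H - F)) + wnorm s (u M) := by
          rw [e]
          exact (wnorm_sub_le _ _ _).trans (by gcongr; exact wnorm_sub_le _ _ _)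
      _ ≤ 2 * 2⁻¹ ^ M * wnorm s g + 2⁻¹ * (2 * 2⁻¹ ^ M * wnorm s g) + 2⁻¹ ^ M * wnorm s g := by
          gcongr
          · exact hH M
          · exact (hD _).trans (by gcongr; exact hH M)
          · exact hun M
      _ = _ := by
          rw [← mul_assoc 2⁻¹, ← mul_assoc 2⁻¹, ENNReal.inv_mul_cancel (by simp) (by simp)]
          ring
  refine sub_eq_zero.1 (eq_zero_of_wnorm_eq_zero (s := s) (le_antisymm ?_ zero_le))
  have ht : Tendsto (fun M : ℕ => (2⁻¹ : ℝ≥0∞) ^ M * (4 * wnorm s g)) atTop (𝓝 0) := by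
    have := ENNReal.Tendsto.mul_const (b := 4 * wnorm s g)
      (ENNReal.tendsto_pow_atTop_nhds_zero_of_lt_one (r := 2⁻¹) (by simp))
      (Or.inr (ENNReal.mul_ne_top (by simp) hg))
    simpa using this
  exact ge_of_tendsto' ht hbound

/-- The ring of convergent power series in `n` variables. -/
def convergent (n : ℕ) : Subring (MvPowerSeries (Fin n) ℝ) where
  carrier := {a | ∃ s, wnorm s a ≠ ⊤}
  mul_mem' := by
    rintro a b ⟨s, hs⟩ ⟨t, ht⟩
    refine ⟨max s t, ne_top_of_le_ne_top (ENNReal.mul_ne_top hs ht) ((wnorm_mul_le _ _ _).trans ?_)⟩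
    gcongr
    exacts [wnorm_anti a (le_max_left s t), wnorm_anti b (le_max_right s t)]
  one_mem' := ⟨0, by
    rw [← MvPowerSeries.monomial_zero_one, wnorm_monomial]
    exact ENNReal.mul_ne_top (by simp) (weight_ne_top _ _)⟩
  add_mem' := by
    rintro a b ⟨s, hs⟩ ⟨t, ht⟩
    refine ⟨max s t, ne_top_of_le_ne_top (ENNReal.add_ne_top.2 ⟨hs, ht⟩)
      ((wnorm_add_le _ _ _).trans ?_)⟩
    gcongr
    exacts [wnorm_anti a (le_max_left s t), wnorm_anti b (le_max_right s t)]
  zero_mem' := ⟨0, by simp [wnorm_zero]⟩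
  neg_mem' := by
    rintro a ⟨s, hs⟩
    exact ⟨s, by rwa [wnorm_neg]⟩

lemma mem_convergent {a : MvPowerSeries (Fin n) ℝ} : a ∈ convergent n ↔ ∃ s, wnorm s a ≠ ⊤ :=
  Iff.rfl

lemma monomial_mem_convergent (α : Fin n →₀ ℕ) (c : ℝ) :
    MvPowerSeries.monomial α c ∈ convergent n :=
  ⟨0, by rw [wnorm_monomial]; exact ENNReal.mul_ne_top (by simp) (weight_ne_top _ _)⟩

/-- `f` is the sum of the monomial of exponent `α` and of terms whose exponents have larger
codes. -/
def IsMonicAt (f : MvPowerSeries (Fin n) ℝ) (α : Fin n →₀ ℕ) : Prop :=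
  MvPowerSeries.coeff α f = 1 ∧
    ∀ β, MvPowerSeries.coeff β f ≠ 0 → β ≠ α → code α < code β

lemma exists_code_minimal {f : MvPowerSeries (Fin n) ℝ} (hf : f ≠ 0) :
    ∃ α, MvPowerSeries.coeff α f ≠ 0 ∧
      ∀ β, MvPowerSeries.coeff β f ≠ 0 → β ≠ α → code α < code β := by
  have hne : {α | MvPowerSeries.coeff α f ≠ 0}.Nonempty := by
    by_contra! h
    refine hf (MvPowerSeries.ext fun α => ?_)
    by_contra hα
    exact (h ▸ hα : α ∈ (∅ : Set (Fin n →₀ ℕ)))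
  obtain ⟨α, hα, hmin⟩ := exists_minimalFor_of_wellFoundedLT _ code hne
  exact ⟨α, hα, fun β hβ hne => lt_of_le_of_ne ((le_total _ _).elim id (hmin hβ))
    fun h => hne (code_injective h.symm)⟩

lemma eventually_wnorm_sub_le {f : MvPowerSeries (Fin n) ℝ} (hf : f ∈ convergent n)
    {α : Fin n →₀ ℕ} (hα : IsMonicAt f α) :
    ∀ᶠ s in atTop, wnorm s (MvPowerSeries.monomial α 1 - f) ≤ 2⁻¹ * weight s α := by
  classical
  set h := MvPowerSeries.monomial α 1 - f with hh
  obtain ⟨s₀, hs₀⟩ : h ∈ convergent n := sub_mem (monomial_mem_convergent α 1) hf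
  have hsupp : ∀ β, MvPowerSeries.coeff β h ≠ 0 → code α + 1 ≤ code β := by
    intro β hβ
    have hne : β ≠ α := by
      rintro rfl
      simp [hh, hα.1] at hβ
    refine hα.2 β (fun h0 => hβ ?_) hne
    rw [hh, map_sub, MvPowerSeries.coeff_monomial_ne hne, h0, sub_zero]
  set q : ℝ≥0∞ := ((code α + 1 : ℕ) : ℝ≥0∞)⁻¹ with hq
  have hbound : ∀ j, wnorm (s₀ + j) h ≤ q ^ j * wnorm s₀ h := by
    intro j
    rw [wnorm, wnorm, ← ENNReal.tsum_mul_left]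
    refine ENNReal.tsum_le_tsum fun β => ?_
    by_cases hβ : MvPowerSeries.coeff β h = 0
    · simp [hβ]
    · rw [weight, pow_add, ← weight, ← mul_assoc, mul_comm]
      gcongr
      rw [hq, ENNReal.inv_le_inv]
      exact_mod_cast hsupp β hβ
  have hc0 : (code α : ℝ≥0∞) ≠ 0 := by exact_mod_cast (code_pos α).ne'
  have hr : q * code α < 1 := by
    rw [hq, mul_comm, ← div_eq_mul_inv]
    refine ENNReal.div_lt_of_lt_mul' ?_
    rw [mul_one]
    exact_mod_cast Nat.lt_succ_self _
  have ht : Tendsto (fun j : ℕ => (q * code α) ^ j * wnorm s₀ h) atTop (𝓝 0) := by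
    simpa using ENNReal.Tendsto.mul_const (b := wnorm s₀ h)
      (ENNReal.tendsto_pow_atTop_nhds_zero_of_lt_one hr) (Or.inr hs₀)
  have hpos : 0 < 2⁻¹ * weight s₀ α :=
    ENNReal.mul_pos (by simp) (weight_ne_zero _ _)
  obtain ⟨J, hJ⟩ := eventually_atTop.1 (ht.eventually_le_const hpos)
  refine eventually_atTop.2 ⟨s₀ + J, fun s hs => ?_⟩
  obtain ⟨j, rfl⟩ := Nat.exists_eq_add_of_le (le_of_add_le_left hs)
  calc wnorm (s₀ + j) h ≤ q ^ j * wnorm s₀ h := hbound j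
    _ = (q * code α) ^ j * wnorm s₀ h * (code α : ℝ≥0∞)⁻¹ ^ j := by
      rw [mul_pow, mul_right_comm, mul_assoc (q ^ j), ← mul_pow,
        ENNReal.mul_inv_cancel hc0 (by simp), one_pow, mul_one]
    _ ≤ 2⁻¹ * weight s₀ α * (code α : ℝ≥0∞)⁻¹ ^ j := by
      refine mul_le_mul_left ?_ _
      exact hJ j (by omega)
    _ = _ := by rw [mul_assoc, weight, weight, pow_add]

open Classical in
/-- The part of a power series supported on the exponents in `E` that `c` sends to `a`, divided
by the monomial of exponent `a`. -/
def quotientPart (E : Set (Fin n →₀ ℕ)) (c : (Fin n →₀ ℕ) → (Fin n →₀ ℕ)) (a : Fin n →₀ ℕ) :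
    MvPowerSeries (Fin n) ℝ →+ MvPowerSeries (Fin n) ℝ where
  toFun h := fun γ => if γ + a ∈ E ∧ c (γ + a) = a then MvPowerSeries.coeff (γ + a) h else 0
  map_zero' := MvPowerSeries.ext fun γ => by
    change (if γ + a ∈ E ∧ c (γ + a) = a then MvPowerSeries.coeff (γ + a) 0 else 0) =
      MvPowerSeries.coeff γ 0
    simp
  map_add' h k := MvPowerSeries.ext fun γ => by
    change (if γ + a ∈ E ∧ c (γ + a) = a then MvPowerSeries.coeff (γ + a) (h + k) else 0) =
      (if γ + a ∈ E ∧ c (γ + a) = a then MvPowerSeries.coeff (γ + a) h else 0) +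
        (if γ + a ∈ E ∧ c (γ + a) = a then MvPowerSeries.coeff (γ + a) k else 0)
    split_ifs <;> simp

open Classical in
lemma coeff_quotientPart (E : Set (Fin n →₀ ℕ)) (c : (Fin n →₀ ℕ) → (Fin n →₀ ℕ))
    (a γ : Fin n →₀ ℕ) (h : MvPowerSeries (Fin n) ℝ) :
    MvPowerSeries.coeff γ (quotientPart E c a h) =
      if γ + a ∈ E ∧ c (γ + a) = a then MvPowerSeries.coeff (γ + a) h else 0 := rfl

lemma sum_wnorm_quotientPart_le (s : ℕ) (E : Set (Fin n →₀ ℕ))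
    (c : (Fin n →₀ ℕ) → (Fin n →₀ ℕ)) (A : Finset (Fin n →₀ ℕ)) (h : MvPowerSeries (Fin n) ℝ) :
    ∑ a ∈ A, wnorm s (quotientPart E c a h) * weight s a ≤ wnorm s h := by
  classical
  set G : (Fin n →₀ ℕ) → (Fin n →₀ ℕ) → ℝ≥0∞ := fun a α =>
    if c α = a then ‖MvPowerSeries.coeff α h‖ₑ * weight s α else 0 with hG
  have h1 : ∀ a, wnorm s (quotientPart E c a h) * weight s a ≤ ∑' α, G a α := by
    intro a
    rw [wnorm, ← ENNReal.tsum_mul_right]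
    refine le_trans (ENNReal.tsum_le_tsum fun γ => ?_)
      (ENNReal.tsum_comp_le_tsum_of_injective (add_left_injective a) (G a))
    rw [coeff_quotientPart, mul_assoc, ← weight_add]
    by_cases hc : c (γ + a) = a
    · by_cases hE : γ + a ∈ E <;> simp [hG, hc, hE]
    · simp [hc]
  calc _ ≤ ∑ a ∈ A, ∑' α, G a α := Finset.sum_le_sum fun a _ => h1 a
    _ = ∑' α, ∑ a ∈ A, G a α := (Summable.tsum_finsetSum fun _ _ => ENNReal.summable).symm
    _ ≤ wnorm s h := ENNReal.tsum_le_tsum fun α => by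
      rw [Finset.sum_ite_eq]
      split_ifs <;> simp

open Classical in
/-- The part of a power series supported outside `E`. -/
def remainderPart (E : Set (Fin n →₀ ℕ)) (h : MvPowerSeries (Fin n) ℝ) :
    MvPowerSeries (Fin n) ℝ :=
  fun α => if α ∈ E then 0 else MvPowerSeries.coeff α h

open Classical in
lemma coeff_remainderPart (E : Set (Fin n →₀ ℕ)) (h : MvPowerSeries (Fin n) ℝ)
    (α : Fin n →₀ ℕ) : MvPowerSeries.coeff α (remainderPart E h) =
      if α ∈ E then 0 else MvPowerSeries.coeff α h := rfl

lemma wnorm_remainderPart_le (s : ℕ) (E : Set (Fin n →₀ ℕ)) (h : MvPowerSeries (Fin n) ℝ) :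
    wnorm s (remainderPart E h) ≤ wnorm s h :=
  ENNReal.tsum_le_tsum fun α => by
    rw [coeff_remainderPart]
    split_ifs <;> simp

lemma sum_quotientPart_mul_monomial (E : Set (Fin n →₀ ℕ)) (c : (Fin n →₀ ℕ) → (Fin n →₀ ℕ))
    (A : Finset (Fin n →₀ ℕ)) (hc : ∀ α ∈ E, c α ∈ A ∧ c α ≤ α)
    (h : MvPowerSeries (Fin n) ℝ) :
    ∑ a ∈ A, quotientPart E c a h * MvPowerSeries.monomial a 1 = h - remainderPart E h := by
  classical
  ext α
  have key : ∀ a, MvPowerSeries.coeff α (quotientPart E c a h * MvPowerSeries.monomial a 1) =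
      if c α = a then (if α ∈ E then MvPowerSeries.coeff α h else 0) else 0 := by
    intro a
    rw [MvPowerSeries.coeff_mul_monomial, coeff_quotientPart, mul_one]
    by_cases hle : a ≤ α
    · rw [if_pos hle, tsub_add_cancel_of_le hle]
      by_cases h1 : α ∈ E <;> by_cases h2 : c α = a <;> simp [h1, h2]
    · rw [if_neg hle]
      split_ifs with h1 h2
      · exact absurd (h1 ▸ (hc α h2).2) hle
      · rfl
      · rfl
  rw [map_sum, Finset.sum_congr rfl fun a _ => key a, Finset.sum_ite_eq, map_sub,
    coeff_remainderPart]
  by_cases h1 : α ∈ E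
  · simp [h1, (hc α h1).1]
  · simp [h1]

/-- Simultaneous division of a power series by finitely many monic power series. -/
lemma exists_division (s : ℕ) (E : Set (Fin n →₀ ℕ)) (c : (Fin n →₀ ℕ) → (Fin n →₀ ℕ))
    (A : Finset (Fin n →₀ ℕ)) (hc : ∀ α ∈ E, c α ∈ A ∧ c α ≤ α)
    (f : (Fin n →₀ ℕ) → MvPowerSeries (Fin n) ℝ)
    (hf : ∀ a ∈ A, wnorm s (MvPowerSeries.monomial a 1 - f a) ≤ 2⁻¹ * weight s a)
    (g : MvPowerSeries (Fin n) ℝ) (hg : wnorm s g ≠ ⊤) :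
    ∃ (q : (Fin n →₀ ℕ) → MvPowerSeries (Fin n) ℝ) (r : MvPowerSeries (Fin n) ℝ),
      (∀ a ∈ A, wnorm s (q a) ≠ ⊤) ∧ wnorm s r ≠ ⊤ ∧
      (∀ α ∈ E, MvPowerSeries.coeff α r = 0) ∧ g = ∑ a ∈ A, q a * f a + r := by
  let D : MvPowerSeries (Fin n) ℝ →+ MvPowerSeries (Fin n) ℝ :=
    ∑ a ∈ A, (AddMonoidHom.mulRight (MvPowerSeries.monomial a 1 - f a)).comp (quotientPart E c a)
  have hDdef : ∀ h, D h = ∑ a ∈ A, quotientPart E c a h * (MvPowerSeries.monomial a 1 - f a) := by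
    intro h
    simp [D]
  have hD : ∀ h, wnorm s (D h) ≤ 2⁻¹ * wnorm s h := by
    intro h
    rw [hDdef]
    refine (wnorm_sum_le _ _ _).trans ?_
    refine le_trans ?_ (mul_le_mul_right (sum_wnorm_quotientPart_le s E c A h) _)
    rw [Finset.mul_sum]
    refine Finset.sum_le_sum fun a ha => (wnorm_mul_le _ _ _).trans ?_
    rw [mul_left_comm]
    gcongr
    exact hf a ha
  obtain ⟨H, hHtop, hH⟩ := exists_sub_map_eq s D hD g hg
  refine ⟨fun a => quotientPart E c a H, remainderPart E H, fun a ha => ?_,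
    ne_top_of_le_ne_top hHtop (wnorm_remainderPart_le _ _ _), fun α hα => ?_, ?_⟩
  · intro htop
    have := (Finset.single_le_sum (fun _ _ => zero_le) ha).trans
      (sum_wnorm_quotientPart_le s E c A H)
    rw [htop, ENNReal.top_mul (weight_ne_zero _ _)] at this
    exact hHtop (top_le_iff.1 this)
  · rw [coeff_remainderPart, if_pos hα]
  · rw [← hH, hDdef]
    simp_rw [mul_sub]
    rw [Finset.sum_sub_distrib, sum_quotientPart_mul_monomial E c A hc]
    abel

instance isNoetherianRing_convergent (n : ℕ) : IsNoetherianRing (convergent n) := by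
  refine ⟨fun I => ?_⟩
  classical
  set E : Set (Fin n →₀ ℕ) := {α | ∃ f ∈ I, IsMonicAt (f : MvPowerSeries (Fin n) ℝ) α} with hE
  have hAfin : {α | Minimal (· ∈ E) α}.Finite :=
    WellQuasiOrderedLE.finite_of_isAntichain (setOfPred_minimal_antichain _)
  set A := hAfin.toFinset
  have hAE : ∀ a ∈ A, a ∈ E := fun a ha => (hAfin.mem_toFinset.1 ha).prop
  have hdom : ∀ α ∈ E, ∃ a ∈ A, a ≤ α := fun α hα => by
    obtain ⟨a, ha, hmin⟩ := exists_minimal_le_of_wellFoundedLT (· ∈ E) α hα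
    exact ⟨a, hAfin.mem_toFinset.2 hmin, ha⟩
  choose! c hc using hdom
  choose! f hfI hf using fun a ha => hAE a ha
  refine ⟨A.image f, le_antisymm (Submodule.span_le.2 ?_) fun g hg => ?_⟩
  · intro x hx
    obtain ⟨a, ha, rfl⟩ := Finset.mem_image.1 (Finset.mem_coe.1 hx)
    exact hfI a ha
  obtain ⟨s₀, hs₀⟩ := mem_convergent.1 g.2
  have hev : ∀ᶠ s in atTop, ∀ a ∈ A,
      wnorm s (MvPowerSeries.monomial a 1 - (f a : MvPowerSeries (Fin n) ℝ)) ≤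
        2⁻¹ * weight s a :=
    (Filter.eventually_all_finset A).2 fun a ha => eventually_wnorm_sub_le (f a).2 (hf a ha)
  obtain ⟨s, hs, hss₀⟩ := (hev.and (eventually_ge_atTop s₀)).exists
  obtain ⟨q, r, hq, hr, hrE, hgqr⟩ := exists_division s E c A hc (fun a => f a) hs g
    (ne_top_of_le_ne_top hs₀ (wnorm_anti _ hss₀))
  have hq' : ∀ a, ∃ q' : convergent n, a ∈ A → (q' : MvPowerSeries (Fin n) ℝ) = q a := fun a => by
    by_cases ha : a ∈ A
    · exact ⟨⟨q a, s, hq a ha⟩, fun _ => rfl⟩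
    · exact ⟨0, fun h => absurd h ha⟩
  choose q' hq' using hq'
  have hsum : ∑ a ∈ A, q' a * f a ∈ Ideal.span (A.image f : Set (convergent n)) :=
    Ideal.sum_mem _ fun a ha => Ideal.mul_mem_left _ _
      (Ideal.subset_span (Finset.mem_coe.2 (Finset.mem_image_of_mem f ha)))
  have hrI : (⟨r, s, hr⟩ : convergent n) = g - ∑ a ∈ A, q' a * f a := by
    ext1
    push_cast
    rw [hgqr, Finset.sum_congr rfl fun a ha => congrArg (· * (f a : MvPowerSeries (Fin n) ℝ))
      (hq' a ha), add_sub_cancel_left]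
  have hr0 : r = 0 := by
    by_contra hne
    obtain ⟨α, hα, hmin⟩ := exists_code_minimal hne
    refine hα (hrE α ⟨⟨_, monomial_mem_convergent 0 (MvPowerSeries.coeff α r)⁻¹⟩ * ⟨r, s, hr⟩,
      Ideal.mul_mem_left I _ ?_, ?_, fun β hβ => hmin β ?_⟩)
    · rw [hrI]
      exact I.sub_mem hg (I.sum_mem fun a ha => Ideal.mul_mem_left I _ (hfI a ha))
    · simp [MvPowerSeries.monomial_zero_eq_C_apply, hα]
    · intro h0
      simp [MvPowerSeries.monomial_zero_eq_C_apply, h0] at hβ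
  have hgeq : g = ∑ a ∈ A, q' a * f a := by
    rw [← sub_eq_zero, ← hrI]
    ext1
    exact hr0
  rw [hgeq]
  exact hsum

/-- The value at `x` of the monomial of exponent `α`. -/
def monom (x : EuclideanSpace ℝ (Fin n)) (α : Fin n →₀ ℕ) : ℝ := ∏ i, x i ^ α i

lemma monom_add (x : EuclideanSpace ℝ (Fin n)) (α β : Fin n →₀ ℕ) :
    monom x (α + β) = monom x α * monom x β := by
  simp [monom, pow_add, Finset.prod_mul_distrib]

lemma monom_zero (x : EuclideanSpace ℝ (Fin n)) : monom x 0 = 1 := by simp [monom]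

lemma monom_single (x : EuclideanSpace ℝ (Fin n)) (i : Fin n) :
    monom x (Finsupp.single i 1) = x i := by
  rw [monom, Finset.prod_eq_single i] <;> simp +contextual [eq_comm]

lemma monom_sum {ι : Type*} (x : EuclideanSpace ℝ (Fin n)) (A : Finset ι)
    (α : ι → Fin n →₀ ℕ) : monom x (∑ j ∈ A, α j) = ∏ j ∈ A, monom x (α j) := by
  simp only [monom, Finsupp.finsetSum_apply, ← Finset.prod_pow_eq_pow_sum]
  exact Finset.prod_comm

/-- The closed polydisc whose `i`-th radius is `pᵢ⁻ˢ`, where `pᵢ` is the `i`-th prime. -/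
def polydisc (n s : ℕ) : Set (EuclideanSpace ℝ (Fin n)) :=
  {x | ∀ i : Fin n, ‖x i‖ₑ ≤ (Nat.nth Nat.Prime i : ℝ≥0∞)⁻¹ ^ s}

lemma polydisc_mem_nhds (n s : ℕ) : polydisc n s ∈ 𝓝 0 := by
  rw [polydisc, Set.ofPred_forall]
  refine Filter.iInter_mem.2 fun i => ?_
  have hc : ContinuousAt (fun x : EuclideanSpace ℝ (Fin n) => ‖x i‖ₑ) 0 := by fun_prop
  have h0 : ‖(0 : EuclideanSpace ℝ (Fin n)) i‖ₑ < (Nat.nth Nat.Prime i : ℝ≥0∞)⁻¹ ^ s := by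
    simpa using ENNReal.pow_pos (by simp) s
  filter_upwards [hc.eventually_lt_const h0] with x hx using hx.le

lemma weight_eq_prod (s : ℕ) (α : Fin n →₀ ℕ) :
    weight s α = ∏ i : Fin n, ((Nat.nth Nat.Prime i : ℝ≥0∞)⁻¹ ^ s) ^ α i := by
  simp only [weight, code, Nat.cast_prod, Nat.cast_pow]
  rw [ENNReal.prod_inv_distrib, ← Finset.prod_pow]
  · simp only [ENNReal.inv_pow, ← pow_mul, mul_comm]
  · intro i _ j _ _
    simp [(prime_nth i).ne_zero]

lemma enorm_monom_le {s : ℕ} {x : EuclideanSpace ℝ (Fin n)} (hx : x ∈ polydisc n s)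
    (α : Fin n →₀ ℕ) : ‖monom x α‖ₑ ≤ weight s α := by
  have : ‖monom x α‖ₑ = ∏ i, ‖x i‖ₑ ^ α i := by
    simp only [monom, enorm_eq_nnnorm, nnnorm_prod, nnnorm_pow]
    push_cast
    rfl
  rw [this, weight_eq_prod]
  exact Finset.prod_le_prod' fun i _ => pow_le_pow_left' (hx i) _

/-- The sum at `x` of a power series. -/
def value (a : MvPowerSeries (Fin n) ℝ) (x : EuclideanSpace ℝ (Fin n)) : ℝ :=
  ∑' α, MvPowerSeries.coeff α a * monom x α

lemma summable_norm_coeff_mul_monom {s : ℕ} {a : MvPowerSeries (Fin n) ℝ} (ha : wnorm s a ≠ ⊤)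
    {x : EuclideanSpace ℝ (Fin n)} (hx : x ∈ polydisc n s) :
    Summable fun α => ‖MvPowerSeries.coeff α a * monom x α‖ := by
  refine summable_norm_iff.2 (Summable.of_enorm (ne_top_of_le_ne_top ha ?_))
  refine ENNReal.tsum_le_tsum fun α => ?_
  rw [enorm_mul]
  gcongr
  exact enorm_monom_le hx α

lemma value_one (x : EuclideanSpace ℝ (Fin n)) : value 1 x = 1 := by
  classical
  rw [value, tsum_eq_single 0 fun α hα => by rw [MvPowerSeries.coeff_one, if_neg hα, zero_mul]]
  simp [monom_zero]

lemma value_add {s : ℕ} {a b : MvPowerSeries (Fin n) ℝ} (ha : wnorm s a ≠ ⊤) (hb : wnorm s b ≠ ⊤)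
    {x : EuclideanSpace ℝ (Fin n)} (hx : x ∈ polydisc n s) :
    value (a + b) x = value a x + value b x := by
  rw [value, value, value, ← (summable_norm_coeff_mul_monom ha hx).of_norm.tsum_add
    (summable_norm_coeff_mul_monom hb hx).of_norm]
  simp only [map_add, add_mul]

lemma value_mul {s : ℕ} {a b : MvPowerSeries (Fin n) ℝ} (ha : wnorm s a ≠ ⊤) (hb : wnorm s b ≠ ⊤)
    {x : EuclideanSpace ℝ (Fin n)} (hx : x ∈ polydisc n s) :
    value (a * b) x = value a x * value b x := by
  classical
  have ha' := summable_norm_coeff_mul_monom ha hx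
  have hb' := summable_norm_coeff_mul_monom hb hx
  have hab := summable_mul_of_summable_norm ha' hb'
  simp only [value]
  rw [ha'.of_norm.tsum_mul_tsum_eq_tsum_sum_antidiagonal hb'.of_norm hab]
  refine tsum_congr fun α => ?_
  rw [MvPowerSeries.coeff_mul, Finset.sum_mul]
  refine Finset.sum_congr rfl fun β hβ => ?_
  rw [← Finset.HasAntidiagonal.mem_antidiagonal.1 hβ, monom_add]
  ring

/-- The monomial of exponent `α`, as a multilinear map evaluated on the diagonal. -/
lemma exists_multilinear_monom (α : Fin n →₀ ℕ) {k : ℕ} (hk : α.degree = k) :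
    ∃ M : ContinuousMultilinearMap ℝ (fun _ : Fin k => EuclideanSpace ℝ (Fin n)) ℝ,
      ‖M‖ ≤ 1 ∧ ∀ x, M (fun _ => x) = monom x α := by
  have hl : α.toMultiset.toList.length = k := by
    rw [Multiset.length_toList, Finsupp.card_toMultiset, ← hk]
    rfl
  subst hl
  refine ⟨(ContinuousMultilinearMap.mkPiAlgebraFin ℝ _ ℝ).compContinuousLinearMap
    fun j => EuclideanSpace.proj (α.toMultiset.toList.get j), ?_, fun x => ?_⟩
  · refine (ContinuousMultilinearMap.norm_compContinuousLinearMap_le _ _).trans ?_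
    rw [ContinuousMultilinearMap.norm_mkPiAlgebraFin, one_mul]
    refine Finset.prod_le_one (fun _ _ => norm_nonneg _) fun j _ => ?_
    exact ContinuousLinearMap.opNorm_le_bound _ zero_le_one fun x => by
      simpa using PiLp.norm_apply_le x _
  · have : (List.ofFn fun j => x (α.toMultiset.toList.get j)) = α.toMultiset.toList.map x := by
      conv_rhs => rw [← List.ofFn_get α.toMultiset.toList, List.map_ofFn]
      rfl
    simp only [ContinuousMultilinearMap.compContinuousLinearMap_apply,
      ContinuousMultilinearMap.mkPiAlgebraFin_apply, EuclideanSpace.coe_proj]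
    rw [this, ← Multiset.prod_coe, ← Multiset.map_coe, Multiset.coe_toList, Finsupp.toMultiset_map,
      Finsupp.prod_toMultiset, Finsupp.prod_mapDomain_index (by simp) (by simp [pow_add]),
      Finsupp.prod_fintype _ _ (by simp)]
    rfl

lemma pow_degree_le_weight (s : ℕ) (α : Fin n →₀ ℕ) :
    ((Nat.nth Nat.Prime n : ℝ≥0∞)⁻¹ ^ s) ^ α.degree ≤ weight s α := by
  rw [weight_eq_prod, Finsupp.degree_eq_sum, ← Finset.prod_pow_eq_pow_sum]
  refine Finset.prod_le_prod' fun i _ => pow_le_pow_left' (pow_le_pow_left' ?_ _) _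
  gcongr
  exact Nat.nth_monotone Nat.infinite_setOfPred_prime i.2.le

lemma analyticAt_value {a : MvPowerSeries (Fin n) ℝ} (ha : a ∈ convergent n) :
    AnalyticAt ℝ (value a) 0 := by
  obtain ⟨s, hs⟩ := mem_convergent.1 ha
  choose M hM1 hM2 using fun (k : ℕ) (α : {α : Fin n →₀ ℕ // α.degree = k}) =>
    exists_multilinear_monom α.1 α.2
  have hfin (k : ℕ) : Finite {α : Fin n →₀ ℕ // α.degree = k} := Finsupp.finite_of_degree_eq k
  have (k : ℕ) : Fintype {α : Fin n →₀ ℕ // α.degree = k} := Fintype.ofFinite _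
  let p : FormalMultilinearSeries ℝ (EuclideanSpace ℝ (Fin n)) ℝ := fun k =>
    ∑ α : {α : Fin n →₀ ℕ // α.degree = k}, MvPowerSeries.coeff α.1 a • M k α
  let r : ℝ≥0 := (Nat.nth Nat.Prime n : ℝ≥0)⁻¹ ^ s
  have hr : (r : ℝ≥0∞) = (Nat.nth Nat.Prime n : ℝ≥0∞)⁻¹ ^ s := by
    simp [r, ENNReal.coe_inv, (prime_nth n).ne_zero, ENNReal.inv_pow]
  have hr0 : 0 < r := pow_pos (by simpa using (prime_nth n).pos) s
  have hp (k : ℕ) : ‖p k‖₊ * r ^ k ≤ (wnorm s a).toNNReal := by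
    rw [← ENNReal.coe_le_coe, ENNReal.coe_toNNReal hs]
    push_cast
    rw [hr]
    calc ‖p k‖ₑ * ((Nat.nth Nat.Prime n : ℝ≥0∞)⁻¹ ^ s) ^ k
        ≤ (∑ α : {α : Fin n →₀ ℕ // α.degree = k}, ‖MvPowerSeries.coeff α.1 a‖ₑ) *
          ((Nat.nth Nat.Prime n : ℝ≥0∞)⁻¹ ^ s) ^ k := by
          gcongr
          refine (enorm_sum_le
            (ε := ContinuousMultilinearMap ℝ (fun _ : Fin k => EuclideanSpace ℝ (Fin n)) ℝ)
            _ _).trans (Finset.sum_le_sum fun α _ => ?_)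
          rw [enorm_smul]
          refine mul_le_of_le_one_right' ?_
          exact enorm_le_coe.2 (hM1 k α)
      _ ≤ ∑ α : {α : Fin n →₀ ℕ // α.degree = k},
          ‖MvPowerSeries.coeff α.1 a‖ₑ * weight s α.1 := by
          rw [Finset.sum_mul]
          refine Finset.sum_le_sum fun α _ => ?_
          gcongr
          exact (pow_degree_le_weight s α.1).trans_eq' (by rw [α.2])
      _ ≤ wnorm s a := by
          rw [← tsum_fintype (L := .unconditional _)]
          exact ENNReal.tsum_comp_le_tsum_of_injective Subtype.val_injective
            fun α => ‖MvPowerSeries.coeff α a‖ₑ * weight s α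
  refine ⟨p, r, p.le_radius_of_bound_nnreal _ hp, by simpa using hr0, fun {y} hy => ?_⟩
  have hy' : y ∈ polydisc n s := fun i => by
    refine le_trans ?_ (pow_le_pow_left' (ENNReal.inv_le_inv.2 (Nat.cast_le.2
      (Nat.nth_monotone Nat.infinite_setOfPred_prime i.2.le))) s)
    rw [← hr]
    refine le_trans ?_ (by simpa only [Metric.mem_eball, edist_zero_right] using hy : ‖y‖ₑ < r).le
    exact enorm_le_iff_norm_le.2 (PiLp.norm_apply_le y i)
  have hsum : HasSum _ (value a y) := (summable_norm_coeff_mul_monom hs hy').of_norm.hasSum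
  have := hsum.tsum_fiberwise Finsupp.degree
  rw [zero_add]
  convert this using 2 with k
  have hpk : p k (fun _ => y) =
      ∑ α : {α : Fin n →₀ ℕ // α.degree = k}, MvPowerSeries.coeff α.1 a * monom y α.1 := by
    simp [p, hM2]
  exact hpk.trans (tsum_fintype (L := .unconditional _) _).symm

/-- The exponent of the monomial obtained by multiplying the letters of a word. -/
def wordExponent (w : Σ k, Fin k → Fin n) : Fin n →₀ ℕ := ∑ j, Finsupp.single (w.2 j) 1

/-- The value of a formal multilinear series on the basis vectors spelled by a word. -/
def wordCoeff (p : FormalMultilinearSeries ℝ (EuclideanSpace ℝ (Fin n)) ℝ)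
    (w : Σ k, Fin k → Fin n) : ℝ := p w.1 fun j => EuclideanSpace.single (w.2 j) 1

lemma degree_wordExponent (w : Σ k, Fin k → Fin n) : (wordExponent w).degree = w.1 := by
  simp [wordExponent]

lemma enorm_wordCoeff_le (p : FormalMultilinearSeries ℝ (EuclideanSpace ℝ (Fin n)) ℝ)
    (w : Σ k, Fin k → Fin n) : ‖wordCoeff p w‖ₑ ≤ ‖p w.1‖ₑ :=
  enorm_le_iff_norm_le.2 <| ((p w.1).le_opNorm _).trans (by simp)

lemma sum_wordCoeff_mul_monom (p : FormalMultilinearSeries ℝ (EuclideanSpace ℝ (Fin n)) ℝ)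
    (x : EuclideanSpace ℝ (Fin n)) (k : ℕ) :
    ∑ w : Fin k → Fin n, wordCoeff p ⟨k, w⟩ * monom x (wordExponent ⟨k, w⟩) =
      p k fun _ => x := by
  have hx : ∑ i, x i • EuclideanSpace.single i (1 : ℝ) = x := by
    simpa using (EuclideanSpace.basisFun (Fin n) ℝ).sum_repr x
  conv_rhs => rw [← hx]
  rw [ContinuousMultilinearMap.map_sum]
  refine Finset.sum_congr rfl fun w _ => ?_
  rw [ContinuousMultilinearMap.map_smul_univ, wordExponent, monom_sum, smul_eq_mul, mul_comm]
  simp only [monom_single, wordCoeff]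

lemma weight_le_pow_degree (s : ℕ) (α : Fin n →₀ ℕ) :
    weight s α ≤ ((2⁻¹ : ℝ≥0∞) ^ s) ^ α.degree := by
  rw [weight_eq_prod, Finsupp.degree_eq_sum, ← Finset.prod_pow_eq_pow_sum]
  refine Finset.prod_le_prod' fun i _ => pow_le_pow_left' (pow_le_pow_left' ?_ _) _
  gcongr
  exact_mod_cast (prime_nth i).two_le

lemma exists_tsum_wordCoeff_ne_top (p : FormalMultilinearSeries ℝ (EuclideanSpace ℝ (Fin n)) ℝ)
    (hp : 0 < p.radius) : ∃ s, ∑' w, ‖wordCoeff p w‖ₑ * weight s (wordExponent w) ≠ ⊤ := by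
  obtain ⟨ρ, hρ0, hρ⟩ := ENNReal.lt_iff_exists_nnreal_btwn.1 hp
  obtain ⟨C, -, hC⟩ := p.nnnorm_mul_pow_le_of_lt_radius hρ
  obtain ⟨s, hs⟩ : ∃ s : ℕ, n * (2⁻¹ : ℝ≥0∞) ^ s ≤ ρ * 2⁻¹ := by
    have h := ENNReal.Tendsto.const_mul (a := (n : ℝ≥0∞))
      (ENNReal.tendsto_pow_atTop_nhds_zero_of_lt_one (r := 2⁻¹) (by simp)) (by simp)
    rw [mul_zero] at h
    exact (h.eventually_le_const (ENNReal.mul_pos hρ0.ne' (by simp))).exists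
  refine ⟨s, ne_top_of_le_ne_top (b := C * 2) (by finiteness) ?_⟩
  rw [ENNReal.tsum_sigma' fun w : Σ k, Fin k → Fin n =>
    ‖wordCoeff p w‖ₑ * weight s (wordExponent w)]
  calc ∑' (k) (w : Fin k → Fin n), ‖wordCoeff p ⟨k, w⟩‖ₑ * weight s (wordExponent ⟨k, w⟩)
      ≤ ∑' k, ∑' _ : Fin k → Fin n, ‖p k‖ₑ * ((2⁻¹ : ℝ≥0∞) ^ s) ^ k := by
        gcongr with k w
        · exact enorm_wordCoeff_le p ⟨k, w⟩
        · exact (weight_le_pow_degree s _).trans_eq (by rw [degree_wordExponent])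
    _ = ∑' k, ‖p k‖ₑ * (n * (2⁻¹ : ℝ≥0∞) ^ s) ^ k := by
        refine tsum_congr fun k => ?_
        rw [tsum_fintype]
        simp
        ring
    _ ≤ ∑' k, (C : ℝ≥0∞) * 2⁻¹ ^ k := by
        refine ENNReal.tsum_le_tsum fun k => ?_
        calc ‖p k‖ₑ * (n * (2⁻¹ : ℝ≥0∞) ^ s) ^ k ≤ ‖p k‖ₑ * (ρ * 2⁻¹) ^ k := by gcongr
          _ = ‖p k‖ₑ * ρ ^ k * 2⁻¹ ^ k := by ring
          _ ≤ (C : ℝ≥0∞) * 2⁻¹ ^ k := by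
            gcongr
            rw [enorm_eq_nnnorm]
            exact_mod_cast hC k
    _ = C * 2 := by rw [ENNReal.tsum_mul_left, ENNReal.tsum_geometric_two]

lemma exists_value_eventuallyEq {f : EuclideanSpace ℝ (Fin n) → ℝ} (hf : AnalyticAt ℝ f 0) :
    ∃ a ∈ convergent n, value a =ᶠ[𝓝 0] f := by
  obtain ⟨p, r, hp⟩ := hf
  obtain ⟨s, hs⟩ := exists_tsum_wordCoeff_ne_top p (hp.r_pos.trans_le hp.r_le)
  let a : MvPowerSeries (Fin n) ℝ := fun α => ∑' w : wordExponent ⁻¹' {α}, wordCoeff p w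
  have ha (α : Fin n →₀ ℕ) :
      MvPowerSeries.coeff α a = ∑' w : wordExponent ⁻¹' {α}, wordCoeff p w := rfl
  refine ⟨a, ⟨s, ne_top_of_le_ne_top hs ?_⟩, ?_⟩
  · rw [← ENNReal.tsum_fiberwise _ wordExponent]
    refine ENNReal.tsum_le_tsum fun α => ?_
    rw [ha]
    calc ‖∑' w : wordExponent ⁻¹' {α}, wordCoeff p w‖ₑ * weight s α
        ≤ (∑' w : wordExponent ⁻¹' {α}, ‖wordCoeff p w‖ₑ) * weight s α := by
          gcongr
          exact enorm_tsum_le_tsum_enorm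
      _ = ∑' w : wordExponent ⁻¹' {α}, ‖wordCoeff p w‖ₑ * weight s (wordExponent w.1) := by
          rw [← ENNReal.tsum_mul_right]
          exact tsum_congr fun w => by rw [show wordExponent w.1 = α from w.2]
  · filter_upwards [polydisc_mem_nhds n s, Metric.eball_mem_nhds 0 hp.r_pos] with x hx hxr
    have hsum : Summable fun w => wordCoeff p w * monom x (wordExponent w) := by
      refine Summable.of_enorm (ne_top_of_le_ne_top hs (ENNReal.tsum_le_tsum fun w => ?_))
      rw [enorm_mul]
      gcongr
      exact enorm_monom_le hx _
    have h1 := hsum.hasSum.sigma fun k => hasSum_fintype _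
    simp only [sum_wordCoeff_mul_monom] at h1
    have h2 := hp.hasSum hxr
    rw [zero_add] at h2
    rw [h2.unique h1, ← (hsum.hasSum.tsum_fiberwise wordExponent).tsum_eq, value]
    refine tsum_congr fun α => ?_
    rw [ha, ← tsum_mul_right]
    exact tsum_congr fun w => by rw [show wordExponent w.1 = α from w.2]

lemma exists_wnorm_ne_top (a b : convergent n) :
    ∃ s, wnorm s (a : MvPowerSeries (Fin n) ℝ) ≠ ⊤ ∧ wnorm s (b : MvPowerSeries (Fin n) ℝ) ≠ ⊤ := by
  obtain ⟨s, hs⟩ := mem_convergent.1 a.2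
  obtain ⟨t, ht⟩ := mem_convergent.1 b.2
  exact ⟨max s t, ne_top_of_le_ne_top hs (wnorm_anti _ (le_max_left s t)),
    ne_top_of_le_ne_top ht (wnorm_anti _ (le_max_right s t))⟩

/-- The germ of the sum of a convergent power series. -/
def toGerm (n : ℕ) : convergent n →+* analyticGermSubring n where
  toFun a := ⟨Germ.ofFun (value a), value a, analyticAt_value a.2, rfl⟩
  map_one' := Subtype.ext <| Germ.coe_eq.2 <| .of_forall value_one
  map_zero' := Subtype.ext <| Germ.coe_eq.2 <| .of_forall fun x => by simp [value]
  map_mul' a b := Subtype.ext <| Germ.coe_eq.2 <| by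
    obtain ⟨s, ha, hb⟩ := exists_wnorm_ne_top a b
    filter_upwards [polydisc_mem_nhds n s] with x hx using value_mul ha hb hx
  map_add' a b := Subtype.ext <| Germ.coe_eq.2 <| by
    obtain ⟨s, ha, hb⟩ := exists_wnorm_ne_top a b
    filter_upwards [polydisc_mem_nhds n s] with x hx using value_add ha hb hx

lemma toGerm_surjective (n : ℕ) : Function.Surjective (toGerm n) := by
  rintro ⟨_, f, hf, rfl⟩
  obtain ⟨a, ha, haf⟩ := exists_value_eventuallyEq hf
  exact ⟨⟨a, ha⟩, Subtype.ext (Germ.coe_eq.2 haf)⟩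

instance isNoetherianRing_analyticGermSubring (n : ℕ) :
    IsNoetherianRing (analyticGermSubring n) :=
  isNoetherianRing_of_surjective _ _ (toGerm n) (toGerm_surjective n)

/-- The germ of a constant map. -/
def constGerm (n m : ℕ) (v : EuclideanSpace ℝ (Fin m)) : analyticGermSubmodule n m :=
  ⟨Germ.ofFun fun _ => v, fun _ => v, analyticAt_const, rfl⟩

set_option synthInstance.maxHeartbeats 200000 in
instance finite_analyticGermSubmodule (n m : ℕ) :
    Module.Finite (analyticGermSubring n) (analyticGermSubmodule n m) := by
  refine ⟨Submodule.fg_def.2 ⟨_, Set.finite_range fun i : Fin m =>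
    constGerm n m (EuclideanSpace.single i 1), eq_top_iff.2 ?_⟩⟩
  rintro ⟨_, f, hf, rfl⟩ -
  let c (i : Fin m) : analyticGermSubring n :=
    ⟨Germ.ofFun fun x => f x i, fun x => f x i,
      ((EuclideanSpace.proj i : EuclideanSpace ℝ (Fin m) →L[ℝ] ℝ).analyticAt _).comp hf, rfl⟩
  have hsum : (⟨Germ.ofFun f, f, hf, rfl⟩ : analyticGermSubmodule n m) =
      (∑ i, c i • constGerm n m (EuclideanSpace.single i 1) : analyticGermSubmodule n m) := by
    have h (A : Finset (Fin m)) :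
        ((∑ i ∈ A, c i • constGerm n m (EuclideanSpace.single i 1) : analyticGermSubmodule n m) :
          (𝓝 (0 : EuclideanSpace ℝ (Fin n))).Germ (EuclideanSpace ℝ (Fin m))) =
        Germ.ofFun fun x => ∑ i ∈ A, f x i • EuclideanSpace.single i 1 := by
      classical
      induction A using Finset.induction_on with
      | empty => rfl
      | insert i A hi ih =>
        simp only [Finset.sum_insert hi]
        rw [Submodule.coe_add, ih]
        rfl
    refine Subtype.ext ((h Finset.univ).trans (congrArg _ (funext fun x => ?_))).symm
    simpa using (EuclideanSpace.basisFun (Fin m) ℝ).sum_repr (f x)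
  rw [hsum]
  exact Submodule.sum_mem _ fun i _ => Submodule.smul_mem _ _ <|
    Submodule.subset_span <| Set.mem_range_self i

end ConvergentSeries

/-- Theorem 5.2: `𝒜_n` is a Noetherian ring and, for every `m ≥ 1`,
`𝒜_n^m` is a Noetherian `𝒜_n`-module. -/
theorem statement_2 (n : ℕ) :
    IsNoetherianRing (analyticGermSubring n) ∧
      ∀ m : ℕ, 1 ≤ m →
        IsNoetherian (analyticGermSubring n) (analyticGermSubmodule n m) :=
  ⟨ConvergentSeries.isNoetherianRing_analyticGermSubring n, fun _ _ =>
    isNoetherian_of_isNoetherianRing_of_finite _ _⟩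
end
end

section
/- Let N, ν, e be admissible dilation data. If γ_t(x) is real analytic on a neighborhood of (0,0) in ℝ^N × ℝ^n with γ_0(x) ≡ x, then there exists a finite subset ℱ′ ⊆ ℒ(𝒫 ∪ 𝒩) that strongly controls W(t,x). Moreover, the union of such an ℱ′ with any finite subset of ℒ(𝒫 ∪ 𝒩) still strongly controls W(t,x); in particular, for any finite 𝒮′ ⊆ ℒ(𝒫 ∪ 𝒩) there exists a finite subset of ℒ(𝒫 ∪ 𝒩) containing 𝒮′ that strongly controls W. -/
open MeasureTheory Metric Filter Set
open scoped ENNReal NNReal Topology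

noncomputable section

open Zhang

namespace Zhang

section SummableSequences

open scoped Classical

variable {K V : Type*} [NormedAddCommGroup V] [NormedSpace ℝ V]

/-- The space of absolutely summable real families. -/
abbrev L1 (K : Type*) := lp (fun _ : K => ℝ) 1

lemma L1.summable_abs (g : L1 K) : Summable fun k => |g k| := by
  have := (lp.memℓp g).summable (by simp)
  simpa using this

lemma L1.norm_eq (g : L1 K) : ‖g‖ = ∑' k, |g k| := by
  rw [lp.norm_eq_tsum_rpow (by simp)]
  simp

/-- An absolutely summable family as an element of `L1`. -/
def L1.of (a : K → ℝ) (ha : Summable fun k => |a k|) : L1 K :=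
  ⟨a, memℓp_gen (by simpa using ha)⟩

/-- The basis vectors of `L1`. -/
def L1.basis (k : K) : L1 K := lp.single 1 k (1 : ℝ)

lemma L1.basis_apply (k j : K) : L1.basis k j = if j = k then 1 else 0 := by
  simp [L1.basis, lp.single_apply, Pi.single_apply]

lemma L1.norm_basis (k : K) : ‖L1.basis k‖ = 1 := by
  simp [L1.basis, lp.norm_single]

lemma L1.summable_smul [CompleteSpace V] {v : K → V} {C : ℝ} (hv : ∀ k, ‖v k‖ ≤ C) (g : L1 K) :
    Summable fun k => g k • v k := by
  refine Summable.of_norm_bounded ((L1.summable_abs g).mul_right C) fun k => ?_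
  rw [norm_smul, Real.norm_eq_abs]
  exact mul_le_mul_of_nonneg_left (hv k) (abs_nonneg _)

/-- The bounded linear map out of `L1` with prescribed values on the basis vectors. -/
def L1.lift [CompleteSpace V] (v : K → V) (C : ℝ) (hv : ∀ k, ‖v k‖ ≤ C) : L1 K →L[ℝ] V :=
  LinearMap.mkContinuous
    { toFun := fun g => ∑' k, g k • v k
      map_add' := fun f g => by
        rw [← (L1.summable_smul hv f).tsum_add (L1.summable_smul hv g)]
        simp [add_smul]
      map_smul' := fun c g => by
        rw [RingHom.id_apply, ← (L1.summable_smul hv g).tsum_const_smul]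
        simp [mul_smul] } C fun g => by
    have hs : Summable fun k => ‖g k • v k‖ :=
      Summable.of_nonneg_of_le (fun _ => norm_nonneg _) (fun k => by
        rw [norm_smul, Real.norm_eq_abs]
        exact mul_le_mul_of_nonneg_left (hv k) (abs_nonneg _)) ((L1.summable_abs g).mul_right C)
    calc ‖∑' k, g k • v k‖ ≤ ∑' k, ‖g k • v k‖ := norm_tsum_le_tsum_norm hs
      _ ≤ ∑' k, |g k| * C := hs.tsum_le_tsum (fun k => by
        rw [norm_smul, Real.norm_eq_abs]
        exact mul_le_mul_of_nonneg_left (hv k) (abs_nonneg _)) ((L1.summable_abs g).mul_right C)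
      _ = C * ‖g‖ := by rw [tsum_mul_right, L1.norm_eq, mul_comm]

lemma L1.lift_apply [CompleteSpace V] (v : K → V) (C : ℝ) (hv : ∀ k, ‖v k‖ ≤ C) (g : L1 K) :
    L1.lift v C hv g = ∑' k, g k • v k := rfl

lemma L1.lift_basis [CompleteSpace V] (v : K → V) (C : ℝ) (hv : ∀ k, ‖v k‖ ≤ C) (k : K) :
    L1.lift v C hv (L1.basis k) = v k := by
  rw [L1.lift_apply, tsum_eq_single k fun j hj => by simp [L1.basis_apply, hj]]
  simp [L1.basis_apply]

lemma L1.norm_lift_le [CompleteSpace V] (v : K → V) {C : ℝ} (hC : 0 ≤ C)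
    (hv : ∀ k, ‖v k‖ ≤ C) : ‖L1.lift v C hv‖ ≤ C :=
  LinearMap.mkContinuous_norm_le _ hC _

lemma L1.hom_ext {S T : L1 K →L[ℝ] V} (h : ∀ k, S (L1.basis k) = T (L1.basis k)) : S = T := by
  refine lp.ext_continuousLinearMap (by simp) fun k => ?_
  ext
  exact h k

end SummableSequences

section PowerSeries

open scoped Classical

variable {ι : Type*} [Fintype ι]

/-- The monomial `z ^ β` as a function on `ι → ℝ`. -/
def mon (β : ι → ℕ) (z : ι → ℝ) : ℝ := ∏ i, z i ^ β i

lemma mon_zero (z : ι → ℝ) : mon 0 z = 1 := by simp [mon]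

lemma mon_add (β β' : ι → ℕ) (z : ι → ℝ) : mon (β + β') z = mon β z * mon β' z := by
  simp [mon, pow_add, Finset.prod_mul_distrib]

lemma mon_mul (β : ι → ℕ) (z z' : ι → ℝ) : mon β (z * z') = mon β z * mon β z' := by
  simp [mon, mul_pow, Finset.prod_mul_distrib]

lemma mon_single (i : ι) (z : ι → ℝ) : mon (Pi.single i 1) z = z i := by
  rw [mon, Finset.prod_eq_single i] <;> simp +contextual

lemma abs_mon (β : ι → ℕ) (z : ι → ℝ) : |mon β z| = mon β fun i => |z i| := by
  simp [mon, Finset.abs_prod]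

lemma mon_nonneg (β : ι → ℕ) {z : ι → ℝ} (hz : ∀ i, 0 ≤ z i) : 0 ≤ mon β z :=
  Finset.prod_nonneg fun i _ => pow_nonneg (hz i) _

lemma mon_pos (β : ι → ℕ) {z : ι → ℝ} (hz : ∀ i, 0 < z i) : 0 < mon β z :=
  Finset.prod_pos fun i _ => pow_pos (hz i) _

lemma mon_le_mon (β : ι → ℕ) {z z' : ι → ℝ} (hz : ∀ i, 0 ≤ z i) (h : ∀ i, z i ≤ z' i) :
    mon β z ≤ mon β z' :=
  Finset.prod_le_prod (fun i _ => pow_nonneg (hz i) _)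
    fun i _ => pow_le_pow_left₀ (hz i) (h i) _

lemma abs_mon_le_one (β : ι → ℕ) {z : ι → ℝ} (hz : ∀ i, |z i| ≤ 1) : |mon β z| ≤ 1 := by
  rw [abs_mon]
  exact Finset.prod_le_one (fun i _ => pow_nonneg (abs_nonneg _) _)
    fun i _ => pow_le_one₀ (abs_nonneg _) (hz i)

/-- The sum of the power series with coefficients `a`. -/
def psum (a : (ι → ℕ) → ℝ) (z : ι → ℝ) : ℝ := ∑' β, a β * mon β z

/-- Evaluation of an absolutely summable power series at a point of the unit polydisc. -/
def L1.eval (z : ι → ℝ) (hz : ∀ i, |z i| ≤ 1) : L1 (ι → ℕ) →L[ℝ] ℝ :=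
  L1.lift (fun β => mon β z) 1 fun β => abs_mon_le_one β hz

lemma L1.eval_apply (z : ι → ℝ) (hz : ∀ i, |z i| ≤ 1) (g : L1 (ι → ℕ)) :
    L1.eval z hz g = psum g z := rfl

lemma L1.eval_basis (z : ι → ℝ) (hz : ∀ i, |z i| ≤ 1) (β : ι → ℕ) :
    L1.eval z hz (L1.basis β) = mon β z := L1.lift_basis _ _ _ _

lemma eventually_abs_le_one : ∀ᶠ z : ι → ℝ in 𝓝 0, ∀ i, |z i| ≤ 1 := by
  filter_upwards [closedBall_mem_nhds (0 : ι → ℝ) one_pos] with z hz i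
  exact (norm_le_pi_norm z i).trans (by simpa using hz)

/-- The value at `β` of the backward shift in the direction `i`, for a choice of one direction of
descent for each nonzero `β`. -/
def L1.backBasis (i : ι) (β : ι → ℕ) : L1 (ι → ℕ) :=
  if h : ∃ j, β j ≠ 0 then
    if h.choose = i then L1.basis (β - Pi.single i 1) else 0 else 0

lemma L1.norm_backBasis_le (i : ι) (β : ι → ℕ) : ‖L1.backBasis i β‖ ≤ 1 := by
  unfold L1.backBasis
  split_ifs <;> simp [L1.norm_basis]

/-- The linear combination with coefficients `z` of the backward shifts. -/
def L1.back : (ι → ℝ) →L[ℝ] (L1 (ι → ℕ) →L[ℝ] L1 (ι → ℕ)) :=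
  ∑ i, (ContinuousLinearMap.proj (R := ℝ) (φ := fun _ : ι => ℝ) i).smulRight
    (L1.lift (L1.backBasis i) 1 (L1.norm_backBasis_le i))

lemma L1.eval_comp_one_sub_back (z : ι → ℝ) (hz : ∀ i, |z i| ≤ 1) :
    (L1.eval z hz).comp (1 - L1.back z) =
      L1.lift (fun β : ι → ℕ => if β = 0 then (1 : ℝ) else 0) 1
        (fun β => by split_ifs <;> simp) := by
  refine L1.hom_ext fun β => ?_
  rw [L1.lift_basis]
  simp only [L1.back, ContinuousLinearMap.comp_apply, sub_apply,
    one_apply_eq_self, map_sub, L1.eval_basis, sum_apply,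
    ContinuousLinearMap.smulRight_apply, ContinuousLinearMap.proj_apply,
    smul_apply, L1.lift_basis, map_sum, map_smul, L1.backBasis]
  by_cases h : ∃ j, β j ≠ 0
  · have h0 : β ≠ 0 := fun h0 => by simp [h0] at h
    have hj := h.choose_spec
    simp only [dif_pos h, h0, if_false]
    rw [Finset.sum_eq_single h.choose (fun i _ hi => by simp [hi.symm]) (by simp), if_pos rfl,
      L1.eval_basis, smul_eq_mul, ← mon_single h.choose z, ← mon_add, sub_eq_zero]
    congr 1
    ext i
    by_cases hi : i = h.choose
    · subst hi; simp; omega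
    · simp [hi]
  · have h0 : β = 0 := by ext i; by_contra hi; exact h ⟨i, hi⟩
    simp [h0, mon_zero]

theorem analyticAt_psum {a : (ι → ℕ) → ℝ} (ha : Summable fun β => |a β|) :
    AnalyticAt ℝ (psum a) 0 := by
  have h1 : AnalyticAt ℝ (fun z : ι → ℝ => Ring.inverse (1 - L1.back z)) 0 := by
    refine AnalyticAt.fun_comp (g := fun x : L1 (ι → ℕ) →L[ℝ] L1 (ι → ℕ) => Ring.inverse (1 - x))
      (f := L1.back) ?_
      (ContinuousLinearMap.analyticAt (L1.back (ι := ι)) 0)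
    rw [map_zero]
    exact analyticAt_inverse_one_sub ℝ _
  have h2 := (((L1.lift (fun β : ι → ℕ => if β = 0 then (1 : ℝ) else 0) 1
    (fun β => by split_ifs <;> simp)).comp
    (ContinuousLinearMap.apply ℝ (L1 (ι → ℕ)) (L1.of a ha))).analyticAt _).fun_comp h1
  refine h2.congr ?_
  have hu : ∀ᶠ z : ι → ℝ in 𝓝 0, IsUnit (1 - L1.back z) := by
    have hc : ContinuousAt (fun z : ι → ℝ => 1 - L1.back z) 0 := by fun_prop
    refine hc.eventually (Units.isOpen.mem_nhds ?_)
    simp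
  filter_upwards [hu, eventually_abs_le_one] with z hz hz1
  rw [← L1.eval_comp_one_sub_back z hz1]
  simp only [ContinuousLinearMap.comp_apply, ContinuousLinearMap.apply_apply]
  rw [← mul_apply_eq_comp, Ring.mul_inverse_cancel _ hz]
  rfl

end PowerSeries

section Expansion

open scoped Classical

variable {ι : Type*} [Fintype ι]

lemma mon_card_fiber {k : ℕ} (w : Fin k → ι) (z : ι → ℝ) :
    mon (fun i => (Finset.univ.filter fun j => w j = i).card) z = ∏ j, z (w j) := by
  rw [mon, ← Finset.prod_fiberwise' Finset.univ w z]
  simp [Finset.prod_const]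

/-- An analytic function of several variables is the sum of an absolutely convergent power
series in the coordinates. -/
theorem exists_hasSum_mon_of_analyticAt {f : (ι → ℝ) → ℝ} (hf : AnalyticAt ℝ f 0) :
    ∃ (a : (ι → ℕ) → ℝ) (R : ℝ), 0 < R ∧
      ∀ z : ι → ℝ, (∀ i, |z i| ≤ R) → HasSum (fun β => a β * mon β z) (f z) := by
  obtain ⟨p, r, hp⟩ := hf
  obtain ⟨r', hr'0, hr'⟩ := ENNReal.lt_iff_exists_nnreal_btwn.1 hp.r_pos
  replace hr'0 : 0 < r' := by exact_mod_cast hr'0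
  obtain ⟨C, hC0, hC⟩ := p.norm_mul_pow_le_of_lt_radius (hr'.trans_le hp.r_le)
  set m : ℝ := ((Fintype.card ι : ℕ) : ℝ) with hm
  have hm0 : 0 ≤ m := by positivity
  set R : ℝ := r' / (2 * (m + 1)) with hR
  have hr'pos : (0 : ℝ) < r' := hr'0
  have hR0 : 0 < R := by positivity
  have hRr : R < r' := by
    rw [hR, div_lt_iff₀ (by positivity)]
    nlinarith
  have hmR : m * R ≤ r' / 2 := by
    rw [hR, mul_div_assoc', div_le_div_iff₀ (by positivity) (by positivity)]
    nlinarith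
  let P : (Σ k, Fin k → ι) → ℝ := fun ω => p ω.1 fun j => Pi.single (ω.2 j) 1
  let ab : (Σ k, Fin k → ι) → ι → ℕ := fun ω i => (Finset.univ.filter fun j => ω.2 j = i).card
  have hP : ∀ ω, |P ω| ≤ ‖p ω.1‖ := fun ω => by
    refine ((p ω.1).le_opNorm _).trans (le_of_eq ?_)
    simp [Pi.norm_single]
  have hmon : ∀ (z : ι → ℝ) ω, mon (ab ω) z = ∏ j, z (ω.2 j) := fun z ω => mon_card_fiber ω.2 z
  have hsumR : Summable fun ω : (Σ k, Fin k → ι) => ‖p ω.1‖ * R ^ ω.1 := by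
    refine (summable_sigma_of_nonneg fun ω => by positivity).2 ⟨fun k => Summable.of_finite, ?_⟩
    refine Summable.of_nonneg_of_le (fun k => tsum_nonneg fun _ => by positivity) (fun k => ?_)
      ((summable_geometric_of_lt_one (r := (1 / 2 : ℝ)) (by norm_num) (by norm_num)).mul_left C)
    have hk : ∑' w : Fin k → ι, ‖p k‖ * R ^ k = m ^ k * (‖p k‖ * R ^ k) := by
      rw [tsum_fintype, Finset.sum_const, nsmul_eq_mul, Finset.card_univ, Fintype.card_pi]
      simp only [Finset.prod_const, Finset.card_univ, Fintype.card_fin, Nat.cast_pow, hm]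
    refine hk.le.trans ?_
    calc m ^ k * (‖p k‖ * R ^ k) = ‖p k‖ * (m * R) ^ k := by rw [mul_pow]; ring
      _ ≤ ‖p k‖ * (r' / 2) ^ k := by gcongr
      _ = ‖p k‖ * r' ^ k * (1 / 2) ^ k := by rw [div_eq_mul_one_div, mul_pow]; ring
      _ ≤ C * (1 / 2) ^ k := by gcongr; exact hC k
  refine ⟨fun β => ∑' ω : {ω // ab ω = β}, P ω, R, hR0, fun z hz => ?_⟩
  have hsum : Summable fun ω => P ω * mon (ab ω) z := by
    refine Summable.of_norm_bounded hsumR fun ω => ?_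
    rw [norm_mul, Real.norm_eq_abs, Real.norm_eq_abs, hmon]
    refine mul_le_mul (hP ω) ?_ (abs_nonneg _) (norm_nonneg _)
    rw [Finset.abs_prod]
    exact (Finset.prod_le_prod (fun _ _ => abs_nonneg _) fun j _ => hz _).trans (by simp)
  have hz' : z ∈ Metric.eball (0 : ι → ℝ) r := by
    rw [Metric.mem_eball, edist_zero_right]
    refine lt_of_le_of_lt ?_ hr'
    rw [← ofReal_norm, ENNReal.ofReal_le_iff_le_toReal (by simp)]
    simpa using ((pi_norm_le_iff_of_nonneg hR0.le).2 hz).trans hRr.le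
  have hval : ∑' ω, P ω * mon (ab ω) z = f z := by
    rw [hsum.tsum_sigma]
    have h1 := (hp.hasSum hz').tsum_eq
    rw [zero_add] at h1
    rw [← h1]
    congr 1
    ext k
    rw [tsum_fintype]
    have h2 : (fun _ : Fin k => z) = fun _ => ∑ i, z i • Pi.single (M := fun _ => ℝ) i 1 := by
      ext _ i
      simp [Finset.sum_apply, Pi.single_apply]
    rw [h2, (p k).map_sum]
    refine Finset.sum_congr rfl fun w _ => ?_
    rw [(p k).map_smul_univ (fun j => z (w j)) fun j => Pi.single (w j) 1, smul_eq_mul, hmon,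
      mul_comm]
  have hs : HasSum (fun ω => P ω * mon (ab ω) z) (f z) := hval ▸ hsum.hasSum
  rw [← (Equiv.sigmaFiberEquiv ab).hasSum_iff] at hs
  have h3 := hs.sigma fun β => ((Equiv.sigmaFiberEquiv ab).summable_iff.2 hsum).sigma_factor β
    |>.hasSum
  convert h3 using 2 with β
  rw [← tsum_mul_right]
  refine tsum_congr fun ω => ?_
  simp [Equiv.sigmaFiberEquiv, ω.2]

end Expansion

section Convergent

variable {ι : Type*} [Fintype ι]

/-- Distinct primes attached to the elements of a finite type. -/
def primeOf (i : ι) : ℕ := Nat.nth Nat.Prime (Fintype.equivFin ι i)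

lemma prime_primeOf (i : ι) : (primeOf i).Prime := Nat.prime_nth_prime _

lemma primeOf_injective : Function.Injective (primeOf : ι → ℕ) := fun i j h => by
  have := Nat.nth_injective Nat.infinite_setOfPred_prime h
  exact (Fintype.equivFin ι).injective (Fin.ext this)

/-- The multiplicative encoding of multi-indices by natural numbers. -/
def code (β : ι → ℕ) : ℕ := ∏ i, primeOf i ^ β i

lemma code_pos (β : ι → ℕ) : 0 < code β :=
  Finset.prod_pos fun i _ => pow_pos (prime_primeOf i).pos _

lemma code_injective : Function.Injective (code : (ι → ℕ) → ℕ) := fun β β' h => by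
  have key : ∀ (γ : ι → ℕ) (i : ι), (code γ).factorization (primeOf i) = γ i := fun γ i => by
    rw [code, Nat.factorization_prod fun j _ => pow_ne_zero _ (prime_primeOf j).ne_zero,
      Finsupp.finsetSum_apply, Finset.sum_eq_single i]
    · simp [(prime_primeOf i).factorization_self]
    · intro j _ hj
      rw [(prime_primeOf j).factorization_pow, Finsupp.single_apply,
        if_neg fun h => hj (primeOf_injective h)]
    · simp
  ext i
  rw [← key β i, h, key β' i]

lemma sum_lt_code (β : ι → ℕ) : ∑ i, β i < code β :=
  calc ∑ i, β i < 2 ^ ∑ i, β i := Nat.lt_two_pow_self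
    _ = ∏ i, 2 ^ β i := (Finset.prod_pow_eq_pow_sum _ _ _).symm
    _ ≤ code β := Finset.prod_le_prod' fun i _ => Nat.pow_le_pow_left (prime_primeOf i).two_le _

/-- A family of polyradii shrinking to zero along which distinct monomials have distinct orders of
magnitude. -/
def rad (σ : ℕ) (i : ι) : ℝ := ((primeOf i : ℝ)⁻¹) ^ σ

lemma rad_pos (σ : ℕ) (i : ι) : 0 < rad σ i :=
  pow_pos (inv_pos.2 (by exact_mod_cast (prime_primeOf i).pos)) _

lemma rad_le (σ : ℕ) (i : ι) : rad σ i ≤ (1 / 2) ^ σ := by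
  refine pow_le_pow_left₀ (by positivity) ?_ _
  rw [one_div]
  exact inv_anti₀ two_pos (by exact_mod_cast (prime_primeOf i).two_le)

lemma rad_add (σ τ : ℕ) : (rad (σ + τ) : ι → ℝ) = rad σ * rad τ := by
  ext i
  simp [rad, pow_add]

lemma mon_rad (β : ι → ℕ) (σ : ℕ) : mon β (rad σ) = ((code β : ℝ)⁻¹) ^ σ := by
  rw [mon, code, Nat.cast_prod, ← Finset.prod_inv_distrib, ← Finset.prod_pow]
  refine Finset.prod_congr rfl fun i _ => ?_
  rw [rad, Nat.cast_pow, ← inv_pow, pow_right_comm]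

lemma mon_rad_pos (β : ι → ℕ) (σ : ℕ) : 0 < mon β (rad σ) := mon_pos β (rad_pos σ)

/-- Absolute convergence of a power series on the polydisc of polyradius `rad σ`. -/
def ConvAt (a : (ι → ℕ) → ℝ) (σ : ℕ) : Prop := Summable fun β => a β * mon β (rad σ)

/-- A power series converging near the origin. -/
def Conv (a : (ι → ℕ) → ℝ) : Prop := ∃ σ, ConvAt a σ

lemma ConvAt.summable_abs {a : (ι → ℕ) → ℝ} {σ : ℕ} (h : ConvAt a σ) :
    Summable fun β => |a β| * mon β (rad σ) := by
  refine (Summable.abs h).congr fun β => ?_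
  rw [abs_mul, abs_of_pos (mon_rad_pos β σ)]

lemma ConvAt.summable {a : (ι → ℕ) → ℝ} {σ : ℕ} (h : ConvAt a σ) {z : ι → ℝ}
    (hz : ∀ i, |z i| ≤ rad σ i) : Summable fun β => a β * mon β z := by
  refine Summable.of_norm_bounded h.summable_abs fun β => ?_
  rw [norm_mul, Real.norm_eq_abs, Real.norm_eq_abs, abs_mon]
  exact mul_le_mul_of_nonneg_left (mon_le_mon β (fun _ => abs_nonneg _) hz) (abs_nonneg _)

lemma ConvAt.mono {a : (ι → ℕ) → ℝ} {σ τ : ℕ} (h : ConvAt a σ) (hστ : σ ≤ τ) : ConvAt a τ := by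
  refine h.summable fun i => ?_
  rw [abs_of_pos (rad_pos τ i)]
  exact pow_le_pow_of_le_one (by positivity)
    (inv_le_one_of_one_le₀ (by exact_mod_cast (prime_primeOf i).one_le)) hστ

lemma ConvAt.of_abs_le {a b : (ι → ℕ) → ℝ} {σ : ℕ} (h : ConvAt a σ) (hb : ∀ β, |b β| ≤ |a β|) :
    ConvAt b σ := by
  refine Summable.of_norm_bounded h.summable_abs fun β => ?_
  rw [norm_mul, Real.norm_eq_abs, Real.norm_eq_abs, abs_of_pos (mon_rad_pos β σ)]
  exact mul_le_mul_of_nonneg_right (hb β) (mon_rad_pos β σ).le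

lemma Conv.add {a b : (ι → ℕ) → ℝ} (ha : Conv a) (hb : Conv b) : Conv (a + b) := by
  obtain ⟨σ, hσ⟩ := ha
  obtain ⟨τ, hτ⟩ := hb
  have h : Summable _ := Summable.add (hσ.mono (le_max_left σ τ)) (hτ.mono (le_max_right σ τ))
  refine ⟨max σ τ, h.congr fun β => ?_⟩
  simp [add_mul]

lemma Conv.neg {a : (ι → ℕ) → ℝ} (ha : Conv a) : Conv (-a) := by
  obtain ⟨σ, hσ⟩ := ha
  exact ⟨σ, (Summable.neg hσ).congr fun β => by simp⟩

lemma eventually_abs_le_rad (σ : ℕ) : ∀ᶠ z : ι → ℝ in 𝓝 0, ∀ i, |z i| ≤ rad σ i := by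
  rw [eventually_all]
  intro i
  have h : Tendsto (fun z : ι → ℝ => |z i|) (𝓝 0) (𝓝 0) := by
    simpa using ((continuous_apply i).abs.tendsto (0 : ι → ℝ))
  exact h.eventually_le_const (rad_pos σ i)

lemma psum_add {a b : (ι → ℕ) → ℝ} (ha : Conv a) (hb : Conv b) :
    psum (a + b) =ᶠ[𝓝 0] psum a + psum b := by
  obtain ⟨σ, hσ⟩ := ha
  obtain ⟨τ, hτ⟩ := hb
  filter_upwards [eventually_abs_le_rad σ, eventually_abs_le_rad τ] with z h1 h2
  rw [Pi.add_apply, psum, psum, psum, ← (hσ.summable h1).tsum_add (hτ.summable h2)]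
  simp [add_mul]

lemma psum_neg (a : (ι → ℕ) → ℝ) : psum (-a) = -psum a := by
  ext z
  simp [psum, tsum_neg]

lemma psum_rad_mul (a : (ι → ℕ) → ℝ) (σ : ℕ) (z : ι → ℝ) :
    psum a (rad σ * z) = psum (fun β => a β * mon β (rad σ)) z := by
  simp [psum, mon_mul, mul_assoc]

theorem exists_psum_of_analyticAt {f : (ι → ℝ) → ℝ} (hf : AnalyticAt ℝ f 0) :
    ∃ (a : (ι → ℕ) → ℝ) (σ : ℕ), ConvAt a σ ∧
      ∀ z, (∀ i, |z i| ≤ rad σ i) → psum a z = f z := by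
  obtain ⟨a, R, hR, h⟩ := exists_hasSum_mon_of_analyticAt hf
  obtain ⟨σ, hσ⟩ := exists_pow_lt_of_lt_one hR (by norm_num : (1 / 2 : ℝ) < 1)
  have hle : ∀ i : ι, rad σ i ≤ R := fun i => (rad_le σ i).trans hσ.le
  exact ⟨a, σ, (h _ fun i => by rw [abs_of_pos (rad_pos σ i)]; exact hle i).summable,
    fun z hz => (h z fun i => (hz i).trans (hle i)).tsum_eq⟩

end Convergent

section Division

open scoped Classical

variable {ι : Type*} [Fintype ι]

/-- A coordinate functional on `L1`. -/
def L1.coord {K : Type*} (k : K) : L1 K →L[ℝ] ℝ :=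
  L1.lift (fun j => if j = k then 1 else 0) 1 fun j => by split_ifs <;> simp

lemma L1.coord_apply {K : Type*} (k : K) (g : L1 K) : L1.coord k g = g k := by
  rw [L1.coord, L1.lift_apply, tsum_eq_single k fun j hj => by simp [hj]]
  simp

/-- Multiplication by the monomial `z ^ γ` on absolutely summable power series. -/
def L1.shift (γ : ι → ℕ) : L1 (ι → ℕ) →L[ℝ] L1 (ι → ℕ) :=
  L1.lift (fun β => L1.basis (β + γ)) 1 fun _ => (L1.norm_basis _).le

lemma L1.norm_shift_le {κ : Type*} (γ : κ → ℕ) (g : L1 (κ → ℕ)) : ‖L1.shift γ g‖ ≤ ‖g‖ := by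
  simpa using (L1.shift γ).le_of_opNorm_le (L1.norm_lift_le _ zero_le_one _) g

lemma L1.eval_shift (γ : ι → ℕ) (g : L1 (ι → ℕ)) (z : ι → ℝ) (hz : ∀ i, |z i| ≤ 1) :
    L1.eval z hz (L1.shift γ g) = mon γ z * L1.eval z hz g := by
  have : (L1.eval z hz).comp (L1.shift γ) = mon γ z • L1.eval z hz := by
    refine L1.hom_ext fun β => ?_
    simp only [ContinuousLinearMap.comp_apply, L1.shift, L1.lift_basis, L1.eval_basis,
      smul_apply, smul_eq_mul, mon_add, mul_comm]
  exact DFunLike.congr_fun this g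

/-- Division with remainder of an absolutely summable power series by finitely many small
perturbations of monomials. -/
theorem L1.exists_division (B : Finset (ι → ℕ)) (h : (ι → ℕ) → L1 (ι → ℕ))
    (hh : ∀ b ∈ B, ‖h b‖ ≤ 1 / 2) (w : L1 (ι → ℕ)) :
    ∃ (q : (ι → ℕ) → L1 (ι → ℕ)) (r : L1 (ι → ℕ)),
      (∀ β, (∃ b ∈ B, b ≤ β) → r β = 0) ∧
      ∀ (z : ι → ℝ) (hz : ∀ i, |z i| ≤ 1), L1.eval z hz w =
        ∑ b ∈ B, L1.eval z hz (q b) * (mon b z + L1.eval z hz (h b)) + L1.eval z hz r := by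
  let v : (ι → ℕ) → L1 (ι → ℕ) := fun β =>
    if hβ : ∃ b ∈ B, b ≤ β then L1.shift (β - hβ.choose) (h hβ.choose) else 0
  have hv : ∀ β, ‖v β‖ ≤ 1 / 2 := fun β => by
    by_cases hβ : ∃ b ∈ B, b ≤ β
    · simp only [v, dif_pos hβ]
      exact (L1.norm_shift_le _ _).trans (hh _ hβ.choose_spec.1)
    · simp [v, dif_neg hβ]
  let T := L1.lift v (1 / 2) hv
  have hT : ‖T‖ ≤ 1 / 2 := L1.norm_lift_le v (by norm_num) hv
  have hu : IsUnit (1 - (-T)) := isUnit_one_sub_of_norm_lt_one (by rw [norm_neg]; linarith)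
  obtain ⟨g, hg⟩ : ∃ g, (1 - (-T)) g = w := by
    obtain ⟨S, hS⟩ := hu.exists_right_inv
    exact ⟨S w, by rw [← mul_apply_eq_comp, hS, one_apply_eq_self]⟩
  have hq : ∀ b β, ‖if hβ : ∃ b ∈ B, b ≤ β then
      if hβ.choose = b then L1.basis (β - b) else (0 : L1 (ι → ℕ)) else 0‖ ≤ 1 := fun b β => by
    split_ifs <;> simp [L1.norm_basis]
  have hr : ∀ β, ‖if ∃ b ∈ B, b ≤ β then (0 : L1 (ι → ℕ)) else L1.basis β‖ ≤ 1 := fun β => by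
    split_ifs <;> simp [L1.norm_basis]
  refine ⟨fun b => L1.lift _ 1 (hq b) g, L1.lift _ 1 hr g, fun β hβ => ?_, fun z hz => ?_⟩
  · have h0 : (L1.coord β).comp (L1.lift _ 1 hr) = 0 := by
      refine L1.hom_ext fun β' => ?_
      rw [ContinuousLinearMap.comp_apply, L1.lift_basis, L1.coord_apply]
      split_ifs with h'
      · simp
      · rw [L1.basis_apply, if_neg]
        · simp
        · rintro rfl
          exact h' hβ
    rw [← L1.coord_apply]
    exact DFunLike.congr_fun h0 g
  · have : (L1.eval z hz).comp (1 - (-T)) =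
        ∑ b ∈ B, (mon b z + L1.eval z hz (h b)) • (L1.eval z hz).comp (L1.lift _ 1 (hq b)) +
          (L1.eval z hz).comp (L1.lift _ 1 hr) := by
      refine L1.hom_ext fun β => ?_
      simp only [ContinuousLinearMap.comp_apply, add_apply, sum_apply, smul_apply, L1.lift_basis,
        one_apply_eq_self, T, sub_neg_eq_add, map_add, smul_eq_mul, v]
      by_cases hβ : ∃ b ∈ B, b ≤ β
      · simp only [dif_pos hβ, if_pos hβ, map_zero, add_zero]
        rw [Finset.sum_eq_single hβ.choose (fun b _ hb => by simp [hb.symm])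
          (fun hb => (hb hβ.choose_spec.1).elim), if_pos rfl, L1.eval_shift, L1.eval_basis,
          L1.eval_basis, add_mul, ← mon_add, add_tsub_cancel_of_le hβ.choose_spec.2, mul_comm]
      · simp [dif_neg hβ, if_neg hβ]
    rw [← hg, ← ContinuousLinearMap.comp_apply, this]
    simp only [ContinuousLinearMap.comp_apply, add_apply, sum_apply, smul_apply, smul_eq_mul,
      mul_comm]

end Division

section LocalDivision

open scoped Classical

variable {ι : Type*} [Fintype ι]

/-- `β` is the initial exponent of the power series `a`. -/
def IsInit (a : (ι → ℕ) → ℝ) (β : ι → ℕ) : Prop :=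
  a β ≠ 0 ∧ ∀ β', a β' ≠ 0 → code β ≤ code β'

lemma IsInit.eventually_tail_le {a : (ι → ℕ) → ℝ} {b : ι → ℕ} (hb : IsInit a b) (ha : Conv a) :
    ∀ᶠ σ in atTop, ConvAt a σ ∧
      ∑' β, |if β = b then 0 else a β * mon β (rad σ)| ≤ 1 / 2 * |a b * mon b (rad σ)| := by
  obtain ⟨τ, hτ⟩ := ha
  set S : ℝ := ∑' β, |a β| * mon β (rad τ) with hS
  set c : ℝ := ((code b : ℕ) : ℝ) with hc_def
  have hc : 0 < c := Nat.cast_pos.2 (code_pos b)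
  have hlim : Tendsto (fun k : ℕ => S * (c / (c + 1)) ^ k) atTop (𝓝 0) := by
    simpa using (tendsto_pow_atTop_nhds_zero_of_lt_one (by positivity)
      ((div_lt_one (by positivity)).2 (lt_add_one c))).const_mul S
  have hpos : 0 < 1 / 2 * (|a b| * mon b (rad τ)) :=
    mul_pos (by norm_num) (mul_pos (abs_pos.2 hb.1) (mon_rad_pos b τ))
  filter_upwards [(tendsto_sub_atTop_nat τ).eventually (hlim.eventually_le_const hpos),
    eventually_ge_atTop τ] with σ hk hσ
  obtain ⟨k, rfl⟩ := Nat.exists_eq_add_of_le hσ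
  rw [Nat.add_sub_cancel_left] at hk
  refine ⟨hτ.mono (Nat.le_add_right _ _), ?_⟩
  have hle : ∀ β, |if β = b then 0 else a β * mon β (rad (τ + k))| ≤
      |a β| * mon β (rad τ) * ((c + 1)⁻¹) ^ k := fun β => by
    have hm := mon_rad_pos β τ
    split_ifs with h
    · rw [abs_zero]; positivity
    by_cases h0 : a β = 0
    · simp [h0]
    have hlt : c + 1 ≤ code β := by
      rw [hc_def]
      exact_mod_cast lt_of_le_of_ne (hb.2 β h0) fun h' => h (code_injective h').symm
    rw [rad_add, mon_mul, ← mul_assoc, abs_mul, abs_mul, abs_of_pos hm,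
      abs_of_pos (mon_rad_pos β k), mon_rad β k]
    gcongr
  have hs := hτ.summable_abs.mul_right (((c + 1)⁻¹) ^ k)
  calc _ ≤ ∑' β, |a β| * mon β (rad τ) * ((c + 1)⁻¹) ^ k :=
        Summable.tsum_le_tsum hle (Summable.of_nonneg_of_le (fun _ => abs_nonneg _) hle hs) hs
    _ = S * (c / (c + 1)) ^ k * (c⁻¹) ^ k := by
        rw [tsum_mul_right, ← hS, mul_assoc, ← mul_pow]
        congr 2
        field_simp
    _ ≤ 1 / 2 * (|a b| * mon b (rad τ)) * (c⁻¹) ^ k := by gcongr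
    _ = _ := by
        rw [rad_add, mon_mul, abs_mul, abs_mul, abs_of_pos (mon_rad_pos b τ),
          abs_of_pos (mon_rad_pos b k), mon_rad b k]
        ring

/-- Division with remainder of a convergent power series by finitely many convergent power
series: the remainder is supported off the multiples of the initial monomials. -/
theorem exists_local_division (B : Finset (ι → ℕ)) (f : (ι → ℕ) → (ι → ℕ) → ℝ)
    (hf : ∀ b ∈ B, Conv (f b)) (hinit : ∀ b ∈ B, IsInit (f b) b) {w : (ι → ℕ) → ℝ}
    (hw : Conv w) :
    ∃ (Q : (ι → ℕ) → (ι → ℝ) → ℝ) (r : (ι → ℕ) → ℝ), (∀ b, AnalyticAt ℝ (Q b) 0) ∧ Conv r ∧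
      (∀ β, (∃ b ∈ B, b ≤ β) → r β = 0) ∧
      psum w =ᶠ[𝓝 0] fun z => ∑ b ∈ B, Q b z * psum (f b) z + psum r z := by
  obtain ⟨τ, hτ⟩ := hw
  obtain ⟨σ, hσf, hσ⟩ := (((Finset.eventually_all B).2 fun b hb =>
    (hinit b hb).eventually_tail_le (hf b hb)).and (eventually_ge_atTop τ)).exists
  have hwσ := hτ.mono hσ
  set K : (ι → ℕ) → ℝ := fun b => f b b * mon b (rad σ) with hK
  have hK0 : ∀ b ∈ B, K b ≠ 0 := fun b hb => mul_ne_zero (hinit b hb).1 (mon_rad_pos b σ).ne'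
  have htail : ∀ b, b ∈ B → Summable fun β =>
      |if β = b then 0 else f b β * mon β (rad σ)| := fun b hb => by
    refine Summable.of_nonneg_of_le (fun _ => abs_nonneg _) (fun β => ?_) (hσf b hb).1.abs
    split_ifs
    · rw [abs_zero]; positivity
    · exact le_rfl
  have hsum : ∀ b, Summable fun β => |if b ∈ B then
      (if β = b then 0 else f b β * mon β (rad σ)) / K b else 0| := fun b => by
    by_cases hb : b ∈ B
    · simp only [if_pos hb, abs_div]
      exact (htail b hb).div_const _
    · simp [hb]
  let h : (ι → ℕ) → L1 (ι → ℕ) := fun b => L1.of _ (hsum b)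
  have hh : ∀ b ∈ B, ‖h b‖ ≤ 1 / 2 := fun b hb => by
    rw [L1.norm_eq]
    change ∑' β, |if b ∈ B then
      (if β = b then 0 else f b β * mon β (rad σ)) / K b else 0| ≤ 1 / 2
    simp only [if_pos hb, abs_div]
    rw [tsum_div_const, div_le_iff₀ (abs_pos.2 (hK0 b hb))]
    exact (hσf b hb).2
  obtain ⟨q, r, hr0, hdiv⟩ := L1.exists_division B h hh (L1.of _ hwσ.abs)
  let D : (ι → ℝ) →L[ℝ] (ι → ℝ) := ContinuousLinearMap.pi fun i =>
    (rad σ i)⁻¹ • ContinuousLinearMap.proj (R := ℝ) (φ := fun _ : ι => ℝ) i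
  have hD : ∀ y, rad σ * D y = y := fun y => by
    ext i
    simp [D, (rad_pos σ i).ne']
  refine ⟨fun b y => psum (q b) (D y) / K b, fun β => r β / mon β (rad σ), fun b => ?_,
    ⟨σ, ?_⟩, fun β hβ => ?_, ?_⟩
  · refine AnalyticAt.div_const ?_
    refine AnalyticAt.fun_comp (g := psum (q b)) (f := D) ?_ (D.analyticAt 0)
    rw [map_zero]
    exact analyticAt_psum (L1.summable_abs (q b))
  · refine (L1.summable_abs r).of_abs.congr fun β => ?_
    rw [div_mul_cancel₀ _ (mon_rad_pos β σ).ne']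
  · simp [hr0 β hβ]
  · filter_upwards [eventually_abs_le_rad σ] with y hy
    have hz : ∀ i, |D y i| ≤ 1 := fun i => by
      have : |D y i| = (rad σ i)⁻¹ * |y i| := by simp [D, abs_mul, abs_of_pos (rad_pos σ i)]
      rw [this, inv_mul_le_iff₀ (rad_pos σ i), mul_one]
      exact hy i
    have hfb : ∀ b ∈ B, mon b (D y) + L1.eval (D y) hz (h b) = psum (f b) y / K b := by
      intro b hb
      rw [eq_div_iff (hK0 b hb), L1.eval_apply]
      have h1 : psum (h b) (D y) = (∑' β, if β = b then 0 else f b β * mon β y) / K b := by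
        rw [← tsum_div_const]
        refine tsum_congr fun β => ?_
        change (if b ∈ B then (if β = b then 0 else f b β * mon β (rad σ)) / K b else 0) *
          mon β (D y) = _
        rw [if_pos hb]
        conv_rhs => rw [← hD y, mon_mul]
        split_ifs <;> ring
      have h2 : mon b (D y) * K b = f b b * mon b y := by
        conv_rhs => rw [← hD y, mon_mul]
        ring
      rw [add_mul, h1, h2, div_mul_cancel₀ _ (hK0 b hb), psum,
        ((hσf b hb).1.summable hy).tsum_eq_add_tsum_ite b]
    have hwy : L1.eval (D y) hz (L1.of _ hwσ.abs) = psum w y := by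
      conv_rhs => rw [← hD y, psum_rad_mul]
      rfl
    have hry : L1.eval (D y) hz r = psum (fun β => r β / mon β (rad σ)) y := by
      conv_rhs => rw [← hD y, psum_rad_mul]
      rw [L1.eval_apply]
      congr 1
      ext β
      rw [div_mul_cancel₀ _ (mon_rad_pos β σ).ne']
    rw [← hwy, hdiv, ← hry]
    congr 1
    refine Finset.sum_congr rfl fun b hb => ?_
    rw [hfb b hb, L1.eval_apply]
    ring

end LocalDivision

section ClosedIdeals

variable {ι κ : Type*} [Fintype ι]

/-- The ring of functions analytic at the origin. -/
def analyticSubring (ι : Type*) [Fintype ι] : Subring ((ι → ℝ) → ℝ) where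
  carrier := {f | AnalyticAt ℝ f 0}
  mul_mem' := fun ha hb => AnalyticAt.mul ha hb
  one_mem' := analyticAt_const
  add_mem' := fun ha hb => AnalyticAt.add ha hb
  zero_mem' := analyticAt_const
  neg_mem' := fun ha => AnalyticAt.neg ha

/-- The germ of `F` at the origin lies in the ideal generated by the functions `g`. -/
def InIdeal (g : κ → (ι → ℝ) → ℝ) (F : (ι → ℝ) → ℝ) : Prop :=
  ∃ G ∈ Submodule.span (analyticSubring ι) (range g), F =ᶠ[𝓝 0] G

variable {g : κ → (ι → ℝ) → ℝ} {F G : (ι → ℝ) → ℝ}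

lemma InIdeal.congr (h : InIdeal g F) (h' : G =ᶠ[𝓝 0] F) : InIdeal g G := by
  obtain ⟨F', hF', hF⟩ := h
  exact ⟨F', hF', h'.trans hF⟩

lemma InIdeal.zero : InIdeal g 0 := ⟨0, Submodule.zero_mem _, EventuallyEq.rfl⟩

lemma InIdeal.add (hF : InIdeal g F) (hG : InIdeal g G) : InIdeal g (F + G) := by
  obtain ⟨F', hF', hF⟩ := hF
  obtain ⟨G', hG', hG⟩ := hG
  exact ⟨F' + G', Submodule.add_mem _ hF' hG', hF.add hG⟩

lemma InIdeal.mul (Q : (ι → ℝ) → ℝ) (hQ : AnalyticAt ℝ Q 0) (hF : InIdeal g F) :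
    InIdeal g (Q * F) := by
  obtain ⟨F', hF', hF⟩ := hF
  exact ⟨Q * F', Submodule.smul_mem _ (⟨Q, hQ⟩ : analyticSubring ι) hF', EventuallyEq.rfl.mul hF⟩

lemma InIdeal.sub (hF : InIdeal g F) (hG : InIdeal g G) : InIdeal g (F - G) := by
  obtain ⟨F', hF', hF⟩ := hF
  obtain ⟨G', hG', hG⟩ := hG
  exact ⟨F' - G', Submodule.sub_mem _ hF' hG', hF.sub hG⟩

lemma InIdeal.sum {κ' : Type*} (s : Finset κ') (f : κ' → (ι → ℝ) → ℝ)
    (h : ∀ i ∈ s, InIdeal g (f i)) : InIdeal g (∑ i ∈ s, f i) := by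
  classical
  induction s using Finset.induction_on with
  | empty => simpa using InIdeal.zero
  | insert i s hi ih =>
    rw [Finset.sum_insert hi]
    exact (h i (Finset.mem_insert_self _ _)).add
      (ih fun j hj => h j (Finset.mem_insert_of_mem hj))

lemma InIdeal.of_mem (k : κ) : InIdeal g (g k) :=
  ⟨g k, Submodule.subset_span ⟨k, rfl⟩, EventuallyEq.rfl⟩

/-- Membership in an ideal of germs gives a finite combination with analytic coefficients. -/
lemma InIdeal.exists_finset (h : InIdeal g F) :
    ∃ (A : Finset κ) (c : κ → (ι → ℝ) → ℝ), (∀ k, AnalyticAt ℝ (c k) 0) ∧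
      F =ᶠ[𝓝 0] fun z => ∑ k ∈ A, c k z * g k z := by
  obtain ⟨G, hG, hFG⟩ := h
  obtain ⟨c, rfl⟩ := Finsupp.mem_span_range_iff_exists_finsupp.1 hG
  refine ⟨c.support, fun k => c k, fun k => (c k).2, hFG.trans (Eventually.of_forall fun z => ?_)⟩
  simp only [Finsupp.sum, Finset.sum_apply]
  rfl

/-- A Dickson basis: finitely many elements generate the upward closure of a set of
multi-indices. -/
lemma exists_finset_generating (I : Set (ι → ℕ)) :
    ∃ B : Finset (ι → ℕ), ↑B ⊆ I ∧ ∀ β ∈ I, ∃ b ∈ B, b ≤ β := by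
  have hfin : {b | Minimal (· ∈ I) b}.Finite :=
    WellQuasiOrderedLE.finite_of_isAntichain (setOfPred_minimal_antichain _)
  refine ⟨hfin.toFinset, fun b hb => (hfin.mem_toFinset.1 hb).prop, fun β hβ => ?_⟩
  obtain ⟨b, hbβ, hb⟩ := exists_minimal_le_of_wellFoundedLT (· ∈ I) β hβ
  exact ⟨b, hfin.mem_toFinset.2 hb, hbβ⟩

/-- Ideals of germs of analytic functions are closed for the coefficientwise topology. -/
theorem inIdeal_psum_of_approx {w : (ι → ℕ) → ℝ} (hw : Conv w)
    (H : ∀ M : ℕ, ∃ s, Conv s ∧ (∀ β, code β < M → s β = w β) ∧ InIdeal g (psum s)) :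
    InIdeal g (psum w) := by
  obtain ⟨B, hBI, hB⟩ := exists_finset_generating
    {β | ∃ a, (Conv a ∧ InIdeal g (psum a)) ∧ IsInit a β}
  have hf : ∀ b, ∃ a, b ∈ B → (Conv a ∧ InIdeal g (psum a)) ∧ IsInit a b := fun b => by
    by_cases hb : b ∈ B
    · obtain ⟨a, ha⟩ := hBI hb
      exact ⟨a, fun _ => ha⟩
    · exact ⟨0, fun h => (hb h).elim⟩
  choose f hf using hf
  obtain ⟨Q, r, hQ, hr, hr0, hdiv⟩ := exists_local_division B f (fun b hb => (hf b hb).1.1)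
    (fun b hb => (hf b hb).2) hw
  have hcomb : InIdeal g (∑ b ∈ B, Q b * psum (f b)) :=
    InIdeal.sum _ _ fun b hb => (hf b hb).1.2.mul _ (hQ b)
  have hdiv' : psum w =ᶠ[𝓝 0] (∑ b ∈ B, Q b * psum (f b)) + psum r :=
    hdiv.trans (Eventually.of_forall fun z => by simp [Finset.sum_apply])
  suffices h : ∀ β, r β = 0 by
    have hr' : psum r = 0 := by
      ext z
      simp [psum, h]
    rw [hr', add_zero] at hdiv'
    exact hcomb.congr hdiv'
  by_contra! hne
  obtain ⟨β₀, hβ₀, hmin⟩ := WellFounded.has_min (InvImage.wf code Nat.lt_wfRel.wf)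
    {β | r β ≠ 0} hne
  replace hmin : ∀ β, r β ≠ 0 → code β₀ ≤ code β := fun β hβ => not_lt.1 (hmin β hβ)
  refine hβ₀ (hr0 β₀ (hB β₀ ?_))
  obtain ⟨s, hs, hsw, hsI⟩ := H (code β₀ + 1)
  refine ⟨s + -w + r, ⟨(hs.add hw.neg).add hr, ?_⟩, ?_, fun β hβ => ?_⟩
  · refine (hsI.sub hcomb).congr ?_
    filter_upwards [psum_add (hs.add hw.neg) hr, psum_add hs hw.neg, hdiv'] with z h1 h2 h3
    simp only [Pi.add_apply, Pi.sub_apply, psum_neg, Pi.neg_apply] at h1 h2 h3 ⊢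
    linarith
  · simpa [hsw β₀ (Nat.lt_succ_self _)] using hβ₀
  · by_contra! hlt
    have h1 : r β = 0 := by
      by_contra h
      exact absurd (hmin β h) (not_le.2 hlt)
    exact hβ (by simp [hsw β (hlt.trans (Nat.lt_succ_self _)), h1])

end ClosedIdeals

section TaylorUniqueness

variable {N : ℕ}

lemma mem_multiIdxLt {M : ℕ} {α : Fin N → ℕ} : α ∈ multiIdxLt N M ↔ ∑ i, α i < M := by
  simp only [multiIdxLt, trunc, Finset.mem_filter, Finset.mem_image, Finset.mem_univ, true_and,
    and_iff_right_iff_imp]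
  intro h
  refine ⟨fun i => ⟨α i, ?_⟩, rfl⟩
  have := Finset.single_le_sum (f := α) (fun _ _ => Nat.zero_le _) (Finset.mem_univ i)
  omega

lemma mon_le_pow_sum {ι : Type*} [Fintype ι] (β : ι → ℕ) {z : ι → ℝ} {θ : ℝ}
    (hz : ∀ i, |z i| ≤ θ) : |mon β z| ≤ θ ^ ∑ i, β i := by
  rw [abs_mon, ← Finset.prod_pow_eq_pow_sum]
  exact Finset.prod_le_prod (fun i _ => by positivity)
    fun i _ => pow_le_pow_left₀ (abs_nonneg _) (hz i) _

/-- The Taylor remainder of an absolutely convergent power series. -/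
lemma exists_abs_psum_sub_le {a : (Fin N → ℕ) → ℝ} {T : ℝ} (hT : 0 < T)
    (ha : Summable fun α => |a α| * T ^ ∑ i, α i) (M : ℕ) :
    ∃ C : ℝ, ∀ v : Fin N → ℝ, ‖v‖ ≤ T →
      |psum a v - ∑ α ∈ multiIdxLt N M, a α * mon α v| ≤ C * ‖v‖ ^ M := by
  refine ⟨(∑' α, |a α| * T ^ ∑ i, α i) / T ^ M, fun v hv => ?_⟩
  have hvi : ∀ i, |v i| ≤ ‖v‖ := fun i => norm_le_pi_norm v i
  have hs : Summable fun α => a α * mon α v := by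
    refine Summable.of_norm_bounded ha fun α => ?_
    rw [norm_mul, Real.norm_eq_abs, Real.norm_eq_abs]
    exact mul_le_mul_of_nonneg_left (mon_le_pow_sum α fun i => (hvi i).trans hv) (abs_nonneg _)
  have hle : ∀ α, |if α ∈ multiIdxLt N M then 0 else a α * mon α v| ≤
      |a α| * T ^ (∑ i, α i) * (‖v‖ / T) ^ M := fun α => by
    split_ifs with h
    · rw [abs_zero]; positivity
    · rw [mem_multiIdxLt, not_lt] at h
      rw [abs_mul, mul_assoc]
      refine mul_le_mul_of_nonneg_left ((mon_le_pow_sum α hvi).trans ?_) (abs_nonneg _)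
      calc ‖v‖ ^ ∑ i, α i = T ^ (∑ i, α i) * (‖v‖ / T) ^ ∑ i, α i := by
            rw [← mul_pow, mul_div_cancel₀ _ hT.ne']
        _ ≤ _ := by
            gcongr ?_ * ?_
            exact pow_le_pow_of_le_one (by positivity) ((div_le_one hT).2 hv) h
  have hs2 := ha.mul_right ((‖v‖ / T) ^ M)
  have hsplit : psum a v - ∑ α ∈ multiIdxLt N M, a α * mon α v =
      ∑' α, if α ∈ multiIdxLt N M then 0 else a α * mon α v := by
    have h1 : Summable fun α => if α ∈ multiIdxLt N M then a α * mon α v else 0 :=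
      summable_of_ne_finset_zero (s := multiIdxLt N M) fun α hα => if_neg hα
    have h2 : ∑' α, (if α ∈ multiIdxLt N M then a α * mon α v else 0) =
        ∑ α ∈ multiIdxLt N M, a α * mon α v := by
      rw [tsum_eq_sum (s := multiIdxLt N M) fun α hα => if_neg hα]
      exact Finset.sum_congr rfl fun α hα => if_pos hα
    rw [← h2, psum, ← hs.tsum_sub h1]
    refine tsum_congr fun α => ?_
    split_ifs <;> simp
  have habs := Summable.of_nonneg_of_le (fun _ => abs_nonneg _) hle hs2
  calc _ ≤ ∑' α, |if α ∈ multiIdxLt N M then 0 else a α * mon α v| := by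
        rw [hsplit]
        exact norm_tsum_le_tsum_norm
          (f := fun α => if α ∈ multiIdxLt N M then 0 else a α * mon α v) habs
    _ ≤ ∑' α, |a α| * T ^ (∑ i, α i) * (‖v‖ / T) ^ M := habs.tsum_le_tsum hle hs2
    _ = _ := by rw [tsum_mul_right, div_pow]; ring

/-- Taylor coefficients are unique. -/
lemma eq_zero_of_sum_mon_isBigO {d : (Fin N → ℕ) → ℝ}
    (h : ∀ M : ℕ, ∃ C : ℝ, ∀ᶠ v : Fin N → ℝ in 𝓝 0,
      |∑ α ∈ multiIdxLt N M, d α * mon α v| ≤ C * ‖v‖ ^ M) (α : Fin N → ℕ) : d α = 0 := by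
  by_contra hα
  obtain ⟨α₀, hα₀, hmin⟩ := WellFounded.has_min (InvImage.wf code Nat.lt_wfRel.wf)
    {α | d α ≠ 0} ⟨α, hα⟩
  replace hmin : ∀ α, d α ≠ 0 → code α₀ ≤ code α := fun α hα => not_lt.1 (hmin α hα)
  set c : ℝ := ((code α₀ : ℕ) : ℝ) with hc_def
  have hc : 0 < c := Nat.cast_pos.2 (code_pos α₀)
  obtain ⟨M, hM⟩ : ∃ M, M = code α₀ := ⟨_, rfl⟩
  obtain ⟨C, hC⟩ := h M
  have hrad : Tendsto (fun σ : ℕ => (rad σ : Fin N → ℝ)) atTop (𝓝 0) := by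
    refine tendsto_pi_nhds.2 fun i => ?_
    exact squeeze_zero (fun σ => (rad_pos σ i).le) (fun σ => rad_le σ i)
      (tendsto_pow_atTop_nhds_zero_of_lt_one (by norm_num) (by norm_num))
  have hnorm : ∀ σ : ℕ, ‖(rad σ : Fin N → ℝ)‖ ≤ (1 / 2) ^ σ := fun σ => by
    refine (pi_norm_le_iff_of_nonneg (by positivity)).2 fun i => ?_
    rw [Real.norm_eq_abs, abs_of_pos (rad_pos σ i)]
    exact rad_le σ i
  have hlim : Tendsto (fun σ : ℕ => ∑ α ∈ multiIdxLt N M, d α * mon α (rad σ) * c ^ σ) atTop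
      (𝓝 (∑ α ∈ multiIdxLt N M, if α = α₀ then d α₀ else 0)) := by
    refine tendsto_finsetSum _ fun α _ => ?_
    have hr : ∀ σ : ℕ, d α * mon α (rad σ) * c ^ σ = d α * (c / code α) ^ σ := fun σ => by
      rw [mon_rad, mul_assoc, ← mul_pow, inv_mul_eq_div]
    simp only [hr]
    split_ifs with h0
    · subst h0
      rw [← hc_def, div_self hc.ne']
      simp
    by_cases hd : d α = 0
    · simp [hd]
    have hlt : c < code α := by
      rw [hc_def]
      exact_mod_cast lt_of_le_of_ne (hmin α hd) fun h' => h0 (code_injective h').symm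
    simpa using (tendsto_pow_atTop_nhds_zero_of_lt_one (by positivity)
      ((div_lt_one (hc.trans hlt)).2 hlt)).const_mul (d α)
  rw [Finset.sum_ite_eq' _ α₀, if_pos (mem_multiIdxLt.2 (hM ▸ sum_lt_code α₀))] at hlim
  have hzero : Tendsto (fun σ : ℕ => |C| * (c / 2 ^ M) ^ σ) atTop (𝓝 0) := by
    have hlt : c < 2 ^ M := by
      rw [hc_def, ← hM]
      exact_mod_cast Nat.lt_two_pow_self
    simpa using (tendsto_pow_atTop_nhds_zero_of_lt_one (by positivity)
      ((div_lt_one (by positivity)).2 hlt)).const_mul |C|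
  refine hα₀ (tendsto_nhds_unique hlim (squeeze_zero_norm' ?_ hzero))
  filter_upwards [hrad.eventually hC] with σ hσ
  rw [← Finset.sum_mul, norm_mul, Real.norm_eq_abs, norm_pow, Real.norm_eq_abs, abs_of_pos hc]
  calc _ ≤ |C| * ((1 / 2) ^ σ) ^ M * c ^ σ := by
        gcongr
        refine hσ.trans ?_
        gcongr
        · exact le_abs_self C
        · exact hnorm σ
    _ = _ := by
        rw [pow_right_comm, one_div, inv_pow, div_eq_mul_inv, mul_pow]
        ring

end TaylorUniqueness

section Splitting

variable {ι₁ ι₂ : Type*} [Fintype ι₁] [Fintype ι₂]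

lemma mon_sumElim (α : ι₁ → ℕ) (β : ι₂ → ℕ) (v : ι₁ → ℝ) (u : ι₂ → ℝ) :
    mon (Sum.elim α β) (Sum.elim v u) = mon α v * mon β u := by
  simp [mon]

/-- The partial sum of a power series over the second group of variables. -/
def partialSum (a : (ι₁ ⊕ ι₂ → ℕ) → ℝ) (u : ι₂ → ℝ) (α : ι₁ → ℕ) : ℝ :=
  psum (fun β => a (Sum.elim α β)) u

variable {a : (ι₁ ⊕ ι₂ → ℕ) → ℝ} {σ : ℕ} {u : ι₂ → ℝ}

lemma ConvAt.summable_prod (ha : ConvAt a σ) (hu : ∀ i, |u i| ≤ rad σ (Sum.inr i : ι₁ ⊕ ι₂))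
    {v : ι₁ → ℝ} (hv : ∀ i, |v i| ≤ rad σ (Sum.inl i : ι₁ ⊕ ι₂)) :
    Summable fun p : (ι₁ → ℕ) × (ι₂ → ℕ) => a (Sum.elim p.1 p.2) * mon p.2 u * mon p.1 v := by
  have h := ha.summable (z := Sum.elim v u) (by rintro (i | i); exacts [hv i, hu i])
  rw [← (Equiv.sumArrowEquivProdArrow ι₁ ι₂ ℕ).symm.summable_iff] at h
  refine h.congr fun p => ?_
  change a (Sum.elim p.1 p.2) * mon (Sum.elim p.1 p.2) _ = _
  rw [mon_sumElim]
  ring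

lemma ConvAt.psum_sumElim (ha : ConvAt a σ) (hu : ∀ i, |u i| ≤ rad σ (Sum.inr i : ι₁ ⊕ ι₂))
    {v : ι₁ → ℝ} (hv : ∀ i, |v i| ≤ rad σ (Sum.inl i : ι₁ ⊕ ι₂)) :
    psum a (Sum.elim v u) = psum (partialSum a u) v := by
  have h := ha.summable_prod hu hv
  have h2 := h.tsum_prod
  simp only [tsum_mul_right] at h2
  rw [psum, ← (Equiv.sumArrowEquivProdArrow ι₁ ι₂ ℕ).symm.tsum_eq]
  refine Eq.trans (tsum_congr fun p => ?_) h2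
  change a (Sum.elim p.1 p.2) * mon (Sum.elim p.1 p.2) _ = _
  rw [mon_sumElim]
  ring

lemma ConvAt.summable_partialSum (ha : ConvAt a σ)
    (hu : ∀ i, |u i| ≤ rad σ (Sum.inr i : ι₁ ⊕ ι₂)) {T : ℝ} (hT : 0 ≤ T)
    (hTσ : ∀ i, T ≤ rad σ (Sum.inl i : ι₁ ⊕ ι₂)) :
    Summable fun α => |partialSum a u α| * T ^ ∑ i, α i := by
  have h := (ha.summable_prod hu (v := fun _ => T) fun i => by
    rw [abs_of_nonneg hT]; exact hTσ i).prod
  simp only [tsum_mul_right] at h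
  refine h.abs.congr fun α => ?_
  rw [abs_mul, abs_of_nonneg (mon_nonneg α fun _ => hT), mon, Finset.prod_pow_eq_pow_sum]
  rfl

end Splitting

section Analyticity

variable {E F : Type*} [NormedAddCommGroup E] [NormedSpace ℝ E] [CompleteSpace E]
  [NormedAddCommGroup F] [NormedSpace ℝ F] [CompleteSpace F]

/-- The analytic local inverse, in the second variable, of a family of maps which is the identity
for the parameter value zero. -/
lemma exists_analyticAt_local_inverse {g : E → F → F}
    (hg : AnalyticAt ℝ (fun q : E × F => g q.1 q.2) 0) (h0 : ∀ᶠ y in 𝓝 (0 : F), g 0 y = y) :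
    ∃ G : E × F → F, AnalyticAt ℝ G 0 ∧ G 0 = 0 ∧ ∀ᶠ q : E × F in 𝓝 0, g q.1 (G q) = q.2 := by
  set D : E × F →L[ℝ] F := fderiv ℝ (fun q : E × F => g q.1 q.2) 0 with hD
  have hDy : ∀ y, D (0, y) = y := by
    have h1 : HasFDerivAt (fun y : F => g 0 y) (D.comp (ContinuousLinearMap.inr ℝ E F)) 0 :=
      HasFDerivAt.comp (𝕜 := ℝ) (f := fun y : F => ((0 : E), y))
        (g := fun q : E × F => g q.1 q.2) 0 hg.differentiableAt.hasFDerivAt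
        (ContinuousLinearMap.inr ℝ E F).hasFDerivAt
    have h2 : HasFDerivAt (fun y : F => g 0 y) (ContinuousLinearMap.id ℝ F) 0 :=
      (hasFDerivAt_id (0 : F)).congr_of_eventuallyEq h0
    exact fun y => DFunLike.congr_fun (h1.unique h2) y
  have hDsy : ∀ s y, D (s, y) = D (s, 0) + y := fun s y => by
    conv_rhs => rw [← hDy y, ← map_add, Prod.mk_add_mk, add_zero, zero_add]
  let i : (E × F) ≃L[ℝ] (E × F) := ContinuousLinearEquiv.equivOfInverse
    ((ContinuousLinearMap.fst ℝ E F).prod D)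
    ((ContinuousLinearMap.fst ℝ E F).prod (ContinuousLinearMap.snd ℝ E F -
      D.comp ((ContinuousLinearMap.inl ℝ E F).comp (ContinuousLinearMap.fst ℝ E F))))
    (fun q => by ext <;> simp [hDsy q.1 q.2]) (fun q => by
      ext
      · simp
      · simp [hDsy q.1 (q.2 - D (q.1, 0))])
  have hΦ : AnalyticAt ℝ (fun q : E × F => (q.1, g q.1 q.2)) 0 := analyticAt_fst.prod hg
  have hΦ' : HasFDerivAt (fun q : E × F => (q.1, g q.1 q.2)) (i : E × F →L[ℝ] E × F) 0 :=
    hasFDerivAt_fst.prodMk hg.differentiableAt.hasFDerivAt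
  have hstrict := hΦ.hasStrictFDerivAt
  rw [hΦ'.fderiv] at hstrict
  let R := hstrict.toOpenPartialHomeomorph _
  have hR : ∀ q, R q = (q.1, g q.1 q.2) := fun q => rfl
  have hR0 : R 0 = 0 := by
    rw [hR]
    ext
    · rfl
    · exact h0.self_of_nhds
  have hsrc : (0 : E × F) ∈ R.source := hstrict.mem_toOpenPartialHomeomorph_source
  have han : AnalyticAt ℝ R.symm 0 := by
    have := R.analyticAt_symm' hsrc hΦ hΦ'.fderiv
    rwa [hR0] at this
  have htgt : R.target ∈ 𝓝 (0 : E × F) :=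
    R.open_target.mem_nhds (hR0 ▸ R.map_source hsrc)
  refine ⟨fun q => (R.symm q).2, analyticAt_snd.comp han, ?_, ?_⟩
  · have := R.left_inv hsrc
    rw [hR0] at this
    simp [this]
  · filter_upwards [htgt] with q hq
    have h1 := R.right_inv hq
    rw [hR] at h1
    have h2 := congrArg Prod.fst h1
    have h3 := congrArg Prod.snd h1
    simp only at h2 h3
    rwa [h2] at h3

end Analyticity

/-- The vector field attached to an analytic family of diffeomorphisms is analytic at the
origin. -/
theorem IsWFor.analyticAt {N n : ℕ} {γ : Euc N → Euc n → Euc n} {ρ : ℝ} {U : Set (Euc n)}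
    {W : Euc N → Euc n → Euc n} (hW : IsWFor γ ρ U W) (hρ : 0 < ρ) (hU : U ∈ 𝓝 (0 : Euc n))
    (hγ : AnalyticAt ℝ (fun q : Euc N × Euc n => γ q.1 q.2) 0) (hγ0 : ∀ x ∈ U, γ 0 x = x) :
    AnalyticAt ℝ (fun q : Euc N × Euc n => W q.1 q.2) 0 := by
  obtain ⟨γinv, hinv, hder⟩ := hW
  obtain ⟨G, hG, hG0, hGγ⟩ := exists_analyticAt_local_inverse hγ
    (eventually_of_mem hU hγ0)
  have hGan : AnalyticAt ℝ (fun q : Euc N × Euc n => (q.1, G q)) 0 := analyticAt_fst.prod hG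
  have hfd : AnalyticAt ℝ (fun q : Euc N × Euc n =>
      fderiv ℝ (fun q : Euc N × Euc n => γ q.1 q.2) (q.1, G q)) 0 := by
    refine AnalyticAt.fun_comp (g := fderiv ℝ (fun q : Euc N × Euc n => γ q.1 q.2)) ?_ hGan
    rw [hG0]
    exact hγ.fderiv
  have hprod : AnalyticAt ℝ (fun q : Euc N × Euc n => ((q.1, (0 : Euc n)),
      fderiv ℝ (fun q : Euc N × Euc n => γ q.1 q.2) (q.1, G q))) 0 :=
    (analyticAt_fst.prod analyticAt_const).prod hfd
  refine (((ContinuousLinearMap.apply ℝ (Euc n) (E := Euc N × Euc n)).analyticAt_bilinear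
    _).fun_comp hprod).congr ?_
  have hGcont : Tendsto G (𝓝 0) (𝓝 0) := by
    have := hG.continuousAt.tendsto
    rwa [hG0] at this
  have hGpair : Tendsto (fun q : Euc N × Euc n => (q.1, G q)) (𝓝 0) (𝓝 0) := by
    have := hGan.continuousAt.tendsto
    rwa [hG0] at this
  have hball : ∀ᶠ q : Euc N × Euc n in 𝓝 0, q.1 ∈ ball (0 : Euc N) ρ :=
    continuous_fst.tendsto (0 : Euc N × Euc n) (ball_mem_nhds _ hρ)
  have hsnd : ∀ᶠ q : Euc N × Euc n in 𝓝 0, q.2 ∈ U :=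
    continuous_snd.tendsto (0 : Euc N × Euc n) hU
  filter_upwards [hball, hsnd, hGcont hU, hGγ, hGpair.eventually hγ.eventually_analyticAt]
    with q hq1 hq2 hq3 hq4 hq5
  have hinvG : γinv q.1 q.2 = G q := by
    rw [← hq4]
    exact (hinv q.1 hq1 (G q) hq3).2
  have h1 := hder q.1 hq1 q.2 hq2
  rw [hinvG] at h1
  have h2 : HasDerivAt (fun ε : ℝ => ((ε • q.1, G q) : Euc N × Euc n)) ((q.1, 0)) 1 := by
    refine HasDerivAt.prodMk ?_ (hasDerivAt_const _ _)
    simpa using (hasDerivAt_id (1 : ℝ)).smul_const q.1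
  have h3 : HasFDerivAt (fun q : Euc N × Euc n => γ q.1 q.2)
      (fderiv ℝ (fun q : Euc N × Euc n => γ q.1 q.2) (q.1, G q)) ((1 : ℝ) • q.1, G q) := by
    rw [one_smul]
    exact hq5.differentiableAt.hasFDerivAt
  have h4 : HasDerivAt (fun ε : ℝ => γ (ε • q.1) (G q))
      (fderiv ℝ (fun q : Euc N × Euc n => γ q.1 q.2) (q.1, G q) (q.1, 0)) 1 :=
    HasFDerivAt.comp_hasDerivAt (l := fun q : Euc N × Euc n => γ q.1 q.2) (1 : ℝ) h3 h2
  exact h4.unique h1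

section Coefficients

variable {N n : ℕ}

/-- The continuous linear map viewing a tuple as a vector of Euclidean space. -/
def toEuc (k : ℕ) : (Fin k → ℝ) →L[ℝ] Euc k := (EuclideanSpace.equiv (Fin k) ℝ).symm

lemma monomial_toEuc (α : Fin N → ℕ) (v : Fin N → ℝ) : monomial α (toEuc N v) = mon α v := rfl

/-- The vector of coordinates indexed by `f`. -/
def part {κ : Type*} {k : ℕ} (f : Fin k → κ) : (κ → ℝ) →L[ℝ] Euc k :=
  (toEuc k).comp (ContinuousLinearMap.pi fun i => ContinuousLinearMap.proj (f i))

/-- The pairing of a vector field `V` at `x` with `y`, as a function of the coordinates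
`(x, y)`. -/
def pairing (V : VF n) (u : Fin n ⊕ Fin n → ℝ) : ℝ :=
  inner ℝ (part Sum.inr u : Euc n) (V (part Sum.inl u))

/-- The time variable among the coordinates `(t, x, y)`. -/
def timePart : (Fin N ⊕ (Fin n ⊕ Fin n) → ℝ) →L[ℝ] Euc N := part Sum.inl

/-- The space variable among the coordinates `(t, x, y)`. -/
def spacePart : (Fin N ⊕ (Fin n ⊕ Fin n) → ℝ) →L[ℝ] Euc n := part (Sum.inr ∘ Sum.inl)

/-- The dual variable among the coordinates `(t, x, y)`. -/
def dualPart : (Fin N ⊕ (Fin n ⊕ Fin n) → ℝ) →L[ℝ] Euc n := part (Sum.inr ∘ Sum.inr)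

variable {W : Euc N → Euc n → Euc n} {U : Set (Euc n)} {X : (Fin N → ℕ) → VF n}

/-- The partial sums of the power series of the pairing with `W` are the pairings with the Taylor
fields of `W`. -/
lemma partialSum_eq_pairing (hX : IsTaylorFieldOf W U X)
    {a : (Fin N ⊕ (Fin n ⊕ Fin n) → ℕ) → ℝ} {σ : ℕ} (ha : ConvAt a σ)
    (haW : ∀ z, (∀ i, |z i| ≤ rad σ i) →
      psum a z = inner ℝ (dualPart z) (W (timePart z) (spacePart z)))
    {u : Fin n ⊕ Fin n → ℝ} (hu : ∀ i, |u i| ≤ rad σ (Sum.inr i : Fin N ⊕ (Fin n ⊕ Fin n)))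
    (huU : part Sum.inl u ∈ U) (α : Fin N → ℕ) :
    partialSum a u α = pairing (X α) u := by
  rw [← sub_eq_zero]
  refine eq_zero_of_sum_mon_isBigO (d := fun α => partialSum a u α - pairing (X α) u)
    (fun M => ?_) α
  obtain ⟨T, hTσ, hT⟩ : ∃ T : ℝ, (∀ i, T ≤ rad σ (Sum.inl i : Fin N ⊕ (Fin n ⊕ Fin n))) ∧ 0 < T :=
    ((eventually_all.2 fun i => nhdsWithin_le_nhds (eventually_le_nhds
      (rad_pos σ (Sum.inl i : Fin N ⊕ (Fin n ⊕ Fin n))))).and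
        (self_mem_nhdsWithin (a := (0 : ℝ)) (s := Ioi 0))).exists
  obtain ⟨C₁, hC₁⟩ := exists_abs_psum_sub_le hT (ha.summable_partialSum hu hT.le hTσ) M
  obtain ⟨C₂, ε, hε, hC₂⟩ := hX.2.2 M
  set y : Euc n := part Sum.inr u with hy
  set x : Euc n := part Sum.inl u with hx
  refine ⟨C₁ + ‖y‖ * (|C₂| * ‖toEuc N‖ ^ M), ?_⟩
  have hball : ∀ᶠ v : Fin N → ℝ in 𝓝 0, toEuc N v ∈ ball (0 : Euc N) ε := by
    have := (toEuc N).continuous.tendsto 0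
    rw [map_zero] at this
    exact this (ball_mem_nhds _ hε)
  filter_upwards [closedBall_mem_nhds (0 : Fin N → ℝ) hT, hball] with v hv hvε
  rw [mem_closedBall_zero_iff] at hv
  have hvi : ∀ i, |v i| ≤ rad σ (Sum.inl i : Fin N ⊕ (Fin n ⊕ Fin n)) := fun i =>
    (norm_le_pi_norm v i).trans (hv.trans (hTσ i))
  have hval : psum (partialSum a u) v = inner ℝ y (W (toEuc N v) x) := by
    rw [← ha.psum_sumElim hu hvi, haW _ (by rintro (i | i); exacts [hvi i, hu i])]
    rfl
  have h1 := hC₁ v hv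
  have h2 : |psum (partialSum a u) v - ∑ α ∈ multiIdxLt N M, pairing (X α) u * mon α v| ≤
      ‖y‖ * (|C₂| * ‖toEuc N‖ ^ M) * ‖v‖ ^ M := by
    have h3 : ∑ α ∈ multiIdxLt N M, pairing (X α) u * mon α v =
        inner ℝ y (∑ α ∈ multiIdxLt N M, monomial α (toEuc N v) • X α x) := by
      rw [inner_sum]
      refine Finset.sum_congr rfl fun α _ => ?_
      rw [inner_smul_right, monomial_toEuc, mul_comm]
      rfl
    rw [hval, h3, ← inner_sub_right]
    refine (abs_real_inner_le_norm _ _).trans ?_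
    rw [mul_assoc, mul_assoc, ← mul_pow]
    refine mul_le_mul_of_nonneg_left ((hC₂ _ hvε x huU).trans ?_) (norm_nonneg _)
    gcongr
    · exact le_abs_self C₂
    · exact (toEuc N).le_opNorm v
  calc |∑ α ∈ multiIdxLt N M, (partialSum a u α - pairing (X α) u) * mon α v|
      = |(psum (partialSum a u) v - ∑ α ∈ multiIdxLt N M, pairing (X α) u * mon α v) -
          (psum (partialSum a u) v - ∑ α ∈ multiIdxLt N M, partialSum a u α * mon α v)| := by
        simp only [sub_mul, Finset.sum_sub_distrib]
        congr 1
        ring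
    _ ≤ _ := (abs_sub _ _).trans (by rw [add_mul, add_comm]; exact add_le_add h1 h2)

/-- The pairing with an analytic field is an analytic combination of finitely many terms of its
Taylor series. -/
theorem exists_analytic_coefficients (hX : IsTaylorFieldOf W U X) (hU : U ∈ 𝓝 (0 : Euc n))
    (hW : AnalyticAt ℝ (fun q : Euc N × Euc n => W q.1 q.2) 0) :
    ∃ (A : Finset (Fin N → ℕ)) (c : (Fin N → ℕ) → (Fin N ⊕ (Fin n ⊕ Fin n) → ℝ) → ℝ),
      (∀ α, AnalyticAt ℝ (c α) 0) ∧ ∀ᶠ z in 𝓝 0,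
        inner ℝ (dualPart z) (W (timePart z) (spacePart z)) =
          ∑ α ∈ A, c α z * (monomial α (timePart z) *
            inner ℝ (dualPart z) (X α (spacePart z))) := by
  have han : AnalyticAt ℝ (fun z : Fin N ⊕ (Fin n ⊕ Fin n) → ℝ =>
      inner ℝ (dualPart z) (W (timePart z) (spacePart z))) 0 := by
    have h1 : AnalyticAt ℝ (fun z : Fin N ⊕ (Fin n ⊕ Fin n) → ℝ =>
        W (timePart z) (spacePart z)) 0 := by
      refine AnalyticAt.fun_comp (g := fun q : Euc N × Euc n => W q.1 q.2)
        (f := fun z : Fin N ⊕ (Fin n ⊕ Fin n) → ℝ => (timePart z, spacePart z)) ?_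
        ((timePart.analyticAt 0).prod (spacePart.analyticAt 0))
      rw [map_zero, map_zero]
      exact hW
    have h2 : AnalyticAt ℝ (fun p : Euc n × Euc n => (inner ℝ p.1 p.2 : ℝ))
        (dualPart (0 : Fin N ⊕ (Fin n ⊕ Fin n) → ℝ),
          W (timePart (0 : Fin N ⊕ (Fin n ⊕ Fin n) → ℝ))
            (spacePart (0 : Fin N ⊕ (Fin n ⊕ Fin n) → ℝ))) :=
      contDiff_inner.contDiffAt.analyticAt
    exact h2.fun_comp (f := fun z : Fin N ⊕ (Fin n ⊕ Fin n) → ℝ =>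
      (dualPart z, W (timePart z) (spacePart z))) ((dualPart.analyticAt 0).prod h1)
  obtain ⟨a, σ, ha, haW⟩ := exists_psum_of_analyticAt han
  have hpsum : psum a =ᶠ[𝓝 0] fun z => inner ℝ (dualPart z) (W (timePart z) (spacePart z)) := by
    filter_upwards [eventually_abs_le_rad σ] with z hz using haW z hz
  have hideal : InIdeal (fun (α : Fin N → ℕ) (z : Fin N ⊕ (Fin n ⊕ Fin n) → ℝ) =>
      monomial α (timePart z) * inner ℝ (dualPart z) (X α (spacePart z))) (psum a) := by
    refine inIdeal_psum_of_approx ⟨σ, ha⟩ fun M => ?_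
    set s : (Fin N ⊕ (Fin n ⊕ Fin n) → ℕ) → ℝ := fun β =>
      if ∑ i, β (Sum.inl i) < M then a β else 0 with hs
    have hsσ : ConvAt s σ := ha.of_abs_le fun β => by
      simp only [hs]
      split_ifs
      · exact le_rfl
      · rw [abs_zero]; positivity
    refine ⟨s, ⟨σ, hsσ⟩, fun β hβ => ?_, ?_⟩
    · refine if_pos ?_
      have := sum_lt_code β
      rw [Fintype.sum_sum_type] at this
      omega
    · refine (InIdeal.sum (multiIdxLt N M) _ fun α _ => InIdeal.of_mem α).congr ?_
      have hUev : ∀ᶠ z : Fin N ⊕ (Fin n ⊕ Fin n) → ℝ in 𝓝 0, spacePart z ∈ U := by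
        have := (spacePart (N := N) (n := n)).continuous.tendsto 0
        rw [map_zero] at this
        exact this hU
      filter_upwards [eventually_abs_le_rad σ, hUev] with z hz hzU
      obtain ⟨v, u, rfl⟩ : ∃ v u, z = Sum.elim v u :=
        ⟨_, _, (Sum.elim_comp_inl_inr z).symm⟩
      have hv : ∀ i, |v i| ≤ rad σ (Sum.inl i : Fin N ⊕ (Fin n ⊕ Fin n)) := fun i => hz (Sum.inl i)
      have hu : ∀ i, |u i| ≤ rad σ (Sum.inr i : Fin N ⊕ (Fin n ⊕ Fin n)) := fun i => hz (Sum.inr i)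
      have hpart : ∀ α, partialSum s u α = if ∑ i, α i < M then partialSum a u α else 0 :=
        fun α => by
          by_cases h : ∑ i, α i < M <;> simp [partialSum, hs, h, psum]
      rw [hsσ.psum_sumElim hu hv, psum, tsum_eq_sum (s := multiIdxLt N M) fun α hα => by
        rw [hpart, if_neg fun h => hα (mem_multiIdxLt.2 h), zero_mul], Finset.sum_apply]
      refine Finset.sum_congr rfl fun α hα => ?_
      rw [hpart, if_pos (mem_multiIdxLt.1 hα), partialSum_eq_pairing hX ha haW hu hzU, mul_comm]
      rfl
  obtain ⟨A, c, hc, hAc⟩ := hideal.exists_finset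
  exact ⟨A, c, hc, hpsum.symm.trans hAc⟩

end Coefficients

section StrongControl

variable {N ν n : ℕ}

/-- The tuple of coordinates `(t, x, y)`. -/
def coords : Euc N × Euc n × Euc n →L[ℝ] (Fin N ⊕ (Fin n ⊕ Fin n) → ℝ) :=
  ContinuousLinearMap.pi fun
    | Sum.inl i => (EuclideanSpace.proj i).comp (ContinuousLinearMap.fst ℝ _ _)
    | Sum.inr (Sum.inl i) => (EuclideanSpace.proj i).comp
        ((ContinuousLinearMap.fst ℝ _ _).comp (ContinuousLinearMap.snd ℝ _ _))
    | Sum.inr (Sum.inr i) => (EuclideanSpace.proj i).comp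
        ((ContinuousLinearMap.snd ℝ _ _).comp (ContinuousLinearMap.snd ℝ _ _))

@[simp] lemma timePart_coords (q : Euc N × Euc n × Euc n) : timePart (coords q) = q.1 := rfl

@[simp] lemma spacePart_coords (q : Euc N × Euc n × Euc n) : spacePart (coords q) = q.2.1 := rfl

@[simp] lemma dualPart_coords (q : Euc N × Euc n × Euc n) : dualPart (coords q) = q.2.2 := rfl

variable {W : Euc N → Euc n → Euc n} {U : Set (Euc n)} {X : (Fin N → ℕ) → VF n}

/-- A field which is analytic in time and space is an analytic combination of finitely many of its
Taylor fields. -/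
theorem exists_analytic_combination (hX : IsTaylorFieldOf W U X) (hU : U ∈ 𝓝 (0 : Euc n))
    (hW : AnalyticAt ℝ (fun q : Euc N × Euc n => W q.1 q.2) 0) :
    ∃ (A : Finset (Fin N → ℕ)) (c : (Fin N → ℕ) → Euc N × Euc n → ℝ),
      (∀ α, AnalyticAt ℝ (c α) 0) ∧ ∀ᶠ q in 𝓝 0,
        W q.1 q.2 = ∑ α ∈ A, (c α q * monomial α q.1) • X α q.2 := by
  obtain ⟨A, c, hc, hcW⟩ := exists_analytic_coefficients hX hU hW
  refine ⟨A, fun α q => c α (coords (q.1, q.2, 0)), fun α => ?_, ?_⟩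
  · have hcomp : AnalyticAt ℝ (fun q : Euc N × Euc n => coords (q.1, q.2, (0 : Euc n))) 0 :=
      (coords.analyticAt _).fun_comp (analyticAt_fst.prod (analyticAt_snd.prod analyticAt_const))
    refine AnalyticAt.fun_comp (g := c α) ?_ hcomp
    have h0 : coords ((0 : Euc N × Euc n).1, (0 : Euc N × Euc n).2, (0 : Euc n)) = 0 :=
      map_zero coords
    rw [h0]
    exact hc α
  · have hev : ∀ᶠ z : Fin N ⊕ (Fin n ⊕ Fin n) → ℝ in 𝓝 0, (∀ α ∈ A, AnalyticAt ℝ (c α) z) ∧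
        inner ℝ (dualPart z) (W (timePart z) (spacePart z)) =
          ∑ α ∈ A, c α z * (monomial α (timePart z) *
            inner ℝ (dualPart z) (X α (spacePart z))) :=
      ((Filter.eventually_all_finset A).2 fun α _ => (hc α).eventually_analyticAt).and hcW
    have hlim : Tendsto (fun q : Euc N × Euc n => coords (q.1, q.2, (0 : Euc n))) (𝓝 0) (𝓝 0) := by
      have : Continuous (fun q : Euc N × Euc n => coords (q.1, q.2, (0 : Euc n))) :=
        coords.continuous.comp (by fun_prop)
      have h := this.tendsto 0
      rwa [show coords ((0 : Euc N × Euc n).1, (0 : Euc N × Euc n).2, (0 : Euc n)) = 0 from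
        map_zero coords] at h
    filter_upwards [hlim.eventually hev.eventually_nhds] with q hq
    refine ext_inner_left ℝ fun y => ?_
    have hline : Tendsto (fun s : ℝ => coords (q.1, q.2, s • y)) (𝓝[>] 0)
        (𝓝 (coords (q.1, q.2, 0))) := by
      have : Continuous (fun s : ℝ => coords (q.1, q.2, s • y)) :=
        coords.continuous.comp (by fun_prop)
      have h := this.tendsto 0
      rw [zero_smul] at h
      exact h.mono_left nhdsWithin_le_nhds
    have hright : Tendsto (fun s : ℝ => ∑ α ∈ A, c α (coords (q.1, q.2, s • y)) *
        (monomial α q.1 * inner ℝ y (X α q.2))) (𝓝[>] 0)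
        (𝓝 (∑ α ∈ A, c α (coords (q.1, q.2, 0)) * (monomial α q.1 * inner ℝ y (X α q.2)))) :=
      tendsto_finsetSum A fun α hα =>
        ((hq.self_of_nhds.1 α hα).continuousAt.tendsto.comp hline).mul_const _
    have hleft : (fun s : ℝ => ∑ α ∈ A, c α (coords (q.1, q.2, s • y)) *
        (monomial α q.1 * inner ℝ y (X α q.2))) =ᶠ[𝓝[>] 0] fun _ => inner ℝ y (W q.1 q.2) := by
      filter_upwards [hline.eventually hq, self_mem_nhdsWithin] with s hs hs0
      have h := hs.2
      simp only [timePart_coords, spacePart_coords, dualPart_coords, real_inner_smul_left] at h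
      refine mul_left_cancel₀ (ne_of_gt hs0) ?_
      rw [h, Finset.mul_sum]
      exact Finset.sum_congr rfl fun α _ => by ring
    rw [tendsto_nhds_unique (tendsto_const_nhds.congr' hleft.symm) hright, inner_sum]
    refine Finset.sum_congr rfl fun α _ => ?_
    rw [real_inner_smul_right, mul_assoc]

lemma mem_lieSpan_of_ne_zero (e : Fin N → Fin ν → ℝ) (X : (Fin N → ℕ) → VF n) {α : Fin N → ℕ}
    (hα : α ≠ 0) : (X α, degMulti e α) ∈ lieSpan (pureSet e X ∪ nonpureSet e X) := by
  refine LieGen.base ?_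
  by_cases h : IsPureDeg (degMulti e α)
  exacts [Or.inl ⟨α, hα, h, rfl⟩, Or.inr ⟨α, hα, h, rfl⟩]

/-- Strong control is inherited by larger finite sets. -/
lemma FinsetStrongControlsW.mono {F G : Finset (VF n × Deg ν)} {e : Fin N → Fin ν → ℝ}
    (h : FinsetStrongControlsW F e W) (hFG : F ⊆ G) : FinsetStrongControlsW G e W := by
  classical
  obtain ⟨ρ', U, V, A, c, hρ', hU, h0U, hV, hUV, hc, hdeg, hW⟩ := h
  refine ⟨ρ', U, V, A, fun l => if h : (l : VF n × Deg ν) ∈ F then c ⟨l, h⟩ else 0,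
    hρ', hU, h0U, hV, hUV, fun l α => ?_, fun l α hl => ?_, fun t ht x hx => ?_⟩
  · by_cases h : (l : VF n × Deg ν) ∈ F
    · simpa only [dif_pos h] using hc ⟨l, h⟩ α
    · simp only [dif_neg h]
      exact contDiffOn_const
  · by_cases h : (l : VF n × Deg ν) ∈ F
    · simpa only [dif_pos h] using hdeg ⟨l, h⟩ α hl
    · simp only [dif_neg h]
      rfl
  · set g : VF n × Deg ν → Euc n := fun l => if h : l ∈ F then
      ∑ α ∈ A, (c ⟨l, h⟩ α t x * monomial α t) • l.1 x else 0 with hg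
    have hF : W t x = ∑ l ∈ F, g l := by
      rw [hW t ht x hx, ← Finset.sum_coe_sort F]
      exact Finset.sum_congr rfl fun l _ => by simp only [hg, dif_pos l.2]
    have hG : ∑ l ∈ F, g l = ∑ l ∈ G, g l :=
      Finset.sum_subset hFG fun l _ hl => dif_neg hl
    rw [hF, hG, ← Finset.sum_coe_sort G]
    refine Finset.sum_congr rfl fun l _ => ?_
    by_cases h : (l : VF n × Deg ν) ∈ F
    · simp only [hg, dif_pos h]
    · simp only [hg, dif_neg h, Pi.zero_apply, zero_mul, zero_smul, Finset.sum_const_zero]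

/-- A field which is analytic in time and space is strongly controlled by finitely many of its
Taylor fields. -/
theorem exists_finset_strongControlsW (e : Fin N → Fin ν → ℝ) (hX : IsTaylorFieldOf W U X)
    (hU : U ∈ 𝓝 (0 : Euc n)) (hW : AnalyticAt ℝ (fun q : Euc N × Euc n => W q.1 q.2) 0) :
    ∃ F : Finset (VF n × Deg ν),
      ↑F ⊆ lieSpan (pureSet e X ∪ nonpureSet e X) ∧ FinsetStrongControlsW F e W := by
  classical
  obtain ⟨A, c, hc, hcW⟩ := exists_analytic_combination hX hU hW
  have hev : ∀ᶠ q in 𝓝 (0 : Euc N × Euc n), (∀ α ∈ A, AnalyticAt ℝ (c α) q) ∧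
      W q.1 q.2 = ∑ α ∈ A, (c α q * monomial α q.1) • X α q.2 :=
    ((Filter.eventually_all_finset A).2 fun α _ => (hc α).eventually_analyticAt).and hcW
  obtain ⟨r, hr, hball⟩ := Metric.eventually_nhds_iff_ball.1 hev
  have hr2 : 0 < r / 2 := half_pos hr
  refine ⟨(A.erase 0).image fun α => (X α, degMulti e α), ?_, r / 2, ball 0 (r / 2), ball 0 r,
    A.erase 0, fun l α t x => if α ∈ A.erase 0 ∧ (l : VF n × Deg ν) = (X α, degMulti e α) then
      c α (t, x) else 0, hr2, isOpen_ball, mem_ball_self hr2, isOpen_ball, ?_, fun l α => ?_,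
    fun l α hl => ?_, fun t ht x hx => ?_⟩
  · intro P hP
    obtain ⟨α, hα, rfl⟩ := Finset.mem_image.1 (Finset.mem_coe.1 hP)
    exact mem_lieSpan_of_ne_zero e X (Finset.ne_of_mem_erase hα)
  · rw [ball_prod_same]
    exact closure_ball_subset_closedBall.trans (closedBall_subset_ball (half_lt_self hr))
  · by_cases h : α ∈ A.erase 0 ∧ (l : VF n × Deg ν) = (X α, degMulti e α)
    · simp only [if_pos h]
      exact fun q hq => ((hball q hq).1 α (Finset.mem_of_mem_erase h.1)).contDiffAt.contDiffWithinAt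
    · simp only [if_neg h]
      exact contDiffOn_const
  · funext t x
    exact if_neg fun h => hl (congrArg Prod.snd h.2).symm
  · have hmem : (t, x) ∈ ball (0 : Euc N × Euc n) r := by
      have : (t, x) ∈ ball (0 : Euc N × Euc n) (r / 2) := by
        rw [← Prod.mk_zero_zero, ← ball_prod_same]
        exact ⟨ht, hx⟩
      exact ball_subset_ball (half_le_self hr.le) this
    have hzero : (c 0 (t, x) * monomial 0 t) • X 0 x = 0 := by
      rw [hX.1, Pi.zero_apply, smul_zero]
    rw [(hball _ hmem).2, ← Finset.sum_erase A hzero, Finset.sum_comm]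
    refine Finset.sum_congr rfl fun α hα => ?_
    have hαF : (X α, degMulti e α) ∈ (A.erase 0).image fun α => (X α, degMulti e α) :=
      Finset.mem_image_of_mem _ hα
    rw [Finset.sum_eq_single_of_mem ⟨_, hαF⟩ (Finset.mem_univ _)]
    · beta_reduce
      rw [if_pos ⟨hα, rfl⟩]
    · intro l _ hl
      beta_reduce
      rw [if_neg fun h => hl (Subtype.ext h.2), zero_mul, zero_smul]

end StrongControl

end Zhang

open scoped Classical in
/-- Theorem 5.3(ii): for real analytic `γ`, a finite subset of
`ℒ(𝒫 ∪ 𝒩)` strongly controls `W`; moreover such finite subsets may be enlarged by any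
finite subset of `ℒ(𝒫 ∪ 𝒩)`, and may be chosen to contain any given finite subset. -/
theorem statement_4 {N ν n : ℕ} (hn : 0 < n)
    (e : Fin N → Fin ν → ℝ) (he : AdmissibleE e)
    (γ : Euc N → Euc n → Euc n) (ρ₀ : ℝ) (hρ₀ : 0 < ρ₀)
    (U₀ : Set (Euc n)) (hU₀ : IsOpen U₀) (h0U₀ : (0 : Euc n) ∈ U₀)
    (hγ : AnalyticOnNhd ℝ (fun q : Euc N × Euc n => γ q.1 q.2) (ball 0 ρ₀ ×ˢ U₀))
    (hγ0 : ∀ x ∈ U₀, γ 0 x = x)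
    (ρ₁ : ℝ) (U₁ : Set (Euc n)) (hρ₁ : 0 < ρ₁) (hρ₁' : ρ₁ ≤ ρ₀)
    (hU₁ : IsOpen U₁) (h0U₁ : (0 : Euc n) ∈ U₁) (hU₁' : U₁ ⊆ U₀)
    (W : Euc N → Euc n → Euc n) (hW : IsWFor γ ρ₁ U₁ W)
    (X : (Fin N → ℕ) → VF n) (hX : IsTaylorFieldOf W U₁ X) :
    (∃ F : Finset (VF n × Deg ν),
      ↑F ⊆ lieSpan (pureSet e X ∪ nonpureSet e X) ∧ FinsetStrongControlsW F e W) ∧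
    (∀ F : Finset (VF n × Deg ν), ↑F ⊆ lieSpan (pureSet e X ∪ nonpureSet e X) →
      FinsetStrongControlsW F e W →
      ∀ G : Finset (VF n × Deg ν), ↑G ⊆ lieSpan (pureSet e X ∪ nonpureSet e X) →
        FinsetStrongControlsW (F ∪ G) e W) ∧
    (∀ S' : Finset (VF n × Deg ν), ↑S' ⊆ lieSpan (pureSet e X ∪ nonpureSet e X) →
      ∃ F : Finset (VF n × Deg ν), S' ⊆ F ∧
        ↑F ⊆ lieSpan (pureSet e X ∪ nonpureSet e X) ∧ FinsetStrongControlsW F e W) := by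
  have hγ' : AnalyticAt ℝ (fun q : Euc N × Euc n => γ q.1 q.2) 0 :=
    hγ 0 ⟨mem_ball_self hρ₀, h0U₀⟩
  have hU : U₁ ∈ 𝓝 (0 : Euc n) := hU₁.mem_nhds h0U₁
  obtain ⟨F, hF, hFW⟩ := exists_finset_strongControlsW e hX hU
    (hW.analyticAt hρ₁ hU hγ' fun x hx => hγ0 x (hU₁' hx))
  refine ⟨⟨F, hF, hFW⟩, fun F' _ hF' G _ => hF'.mono Finset.subset_union_left, fun S' hS' =>
    ⟨F ∪ S', Finset.subset_union_right, ?_, hFW.mono Finset.subset_union_left⟩⟩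
  rw [Finset.coe_union]
  exact union_subset hF hS'
end
end
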